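/- arXiv:math/0207081 — 3 statements merged into one kernel-verified Lean document; each statement's English description precedes it below -/
import Mathlib

section
/- Let k be an algebraically closed complete non-Archimedean valued field and let f = Σ_{n∈ℤ} aₙ zⁿ be a Laurent series with |aₙ| rⁿ → 0 as n → +∞ and |aₙ| tⁿ → 0 as n → −∞ for every t > 0 (so f is analytic on the punctured disc 0 < |z| ≤ r). If aₙ ≠ 0 for infinitely many negative n, then f has infinitely many zeros z ∈ k with 0 < |z| ≤ r. -/
open Filter

open Polynomial in
theorem aux_prod {k : Type*} [NontriviallyNormedField k] [IsUltrametricDist k]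
    (s : Multiset k) : ∃ (G : ℝ) (A : ℕ) (t : Multiset k), 0 < G ∧ t ≤ s ∧ (∀ α ∈ t, ‖α‖ = 1) ∧
      (∀ n, ‖((s.map (fun α => X - C α)).prod).coeff n‖ ≤ G) ∧
      ‖((s.map (fun α => X - C α)).prod).coeff A‖ = G ∧
      ‖((s.map (fun α => X - C α)).prod).coeff (A + Multiset.card t)‖ = G ∧
      (∀ n, n < A → ‖((s.map (fun α => X - C α)).prod).coeff n‖ < G) ∧
      (∀ n, A + Multiset.card t < n → ‖((s.map (fun α => X - C α)).prod).coeff n‖ < G) ∧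
      (∀ w : k, ‖w‖ = 1 → ‖((s.map (fun α => X - C α)).prod).eval w‖ =
        G * (t.map (fun α => ‖w - α‖)).prod) := by
  induction s using Multiset.induction_on with
  | empty =>
    refine ⟨1, 0, 0, one_pos, le_rfl, by simp, ?_, by simp, by simp, by simp, ?_, by simp⟩
    · intro n
      simp only [Multiset.map_zero, Multiset.prod_zero, coeff_one]
      split_ifs <;> simp
    · intro n hn
      have : n ≠ 0 := by simp at hn; omega
      simp [coeff_one, this]
  | cons α s ih =>
    obtain ⟨G, A, t, hG, hts, ht, hle, hA, hB, hlt, hgt, hev⟩ := ih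
    simp only [Multiset.map_cons, Multiset.prod_cons]
    set P := (s.map (fun α => X - C α)).prod with hP
    have h0 : ((X - C α) * P).coeff 0 = - (α * P.coeff 0) := by
      simp [sub_mul, mul_coeff_zero]
    have hS : ∀ n, ((X - C α) * P).coeff (n+1) = P.coeff n - α * P.coeff (n+1) := by
      intro n; simp [sub_mul, coeff_X_mul]
    have hsub : ∀ x y : k, ‖x - y‖ ≤ max ‖x‖ ‖y‖ := fun x y => by
      have := IsUltrametricDist.norm_add_le_max x (-y)
      simpa [sub_eq_add_neg] using this
    have hL : ∀ x y : k, ‖y‖ < ‖x‖ → ‖x - y‖ = ‖x‖ := fun x y h => by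
      have := IsUltrametricDist.norm_add_eq_max_of_norm_ne_norm (x := x) (y := -y) (by simpa using h.ne')
      rw [sub_eq_add_neg, this, norm_neg, max_eq_left h.le]
    have hR : ∀ x y : k, ‖x‖ < ‖y‖ → ‖x - y‖ = ‖y‖ := fun x y h => by
      rw [norm_sub_rev]; exact hL _ _ h
    have hα0 := norm_nonneg α
    rcases lt_trichotomy ‖α‖ 1 with h1 | h1 | h1
    · have hm : ∀ n, ‖α * P.coeff n‖ < G := fun n => by
        rw [norm_mul]
        have := hle n; have := norm_nonneg (P.coeff n)
        nlinarith
      refine ⟨G, A + 1, t, hG, hts.trans (Multiset.le_cons_self _ _), ht, ?_, ?_, ?_, ?_, ?_, ?_⟩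
      · rintro (_ | n)
        · rw [h0, norm_neg]; exact (hm 0).le
        · rw [hS]; exact (hsub _ _).trans (max_le (hle n) (hm _).le)
      · rw [hS, hL, hA]; rw [hA]; exact hm _
      · rw [show A + 1 + Multiset.card t = A + Multiset.card t + 1 by ring, hS, hL, hB]
        rw [hB]; exact hm _
      · rintro (_ | n) hn
        · rw [h0, norm_neg]; exact (hm 0)
        · rw [hS]; exact (hsub _ _).trans_lt (max_lt (hlt n (by omega)) (hm _))
      · rintro (_ | n) hn
        · omega
        · rw [hS]; exact (hsub _ _).trans_lt (max_lt (hgt n (by omega)) (hm _))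
      · intro w hw
        rw [eval_mul, norm_mul, hev w hw]
        simp only [eval_sub, eval_X, eval_C]
        rw [hL w α (by rw [hw]; exact h1), hw, one_mul]
    · have hm : ∀ n, ‖α * P.coeff n‖ = ‖P.coeff n‖ := fun n => by
        rw [norm_mul, h1, one_mul]
      refine ⟨G, A, α ::ₘ t, hG, Multiset.cons_le_cons _ hts, ?_, ?_, ?_, ?_, ?_, ?_, ?_⟩
      · intro β hβ
        rcases Multiset.mem_cons.1 hβ with rfl | hβ
        · exact h1
        · exact ht _ hβ
      · rintro (_ | n)
        · rw [h0, norm_neg, hm]; exact hle 0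
        · rw [hS]; exact (hsub _ _).trans (max_le (hle n) ((hm _).trans_le (hle _)))
      · rcases A with _ | A
        · rw [h0, norm_neg, hm, hA]
        · rw [hS, hR, hm, hA]; rw [hm, hA]; exact hlt _ (by omega)
      · rw [Multiset.card_cons, ← add_assoc, hS, hL, hB]
        rw [hB, hm]; exact hgt _ (by omega)
      · rintro (_ | n) hn
        · rw [h0, norm_neg, hm]; exact hlt 0 hn
        · rw [hS]; exact (hsub _ _).trans_lt (max_lt (hlt n (by omega)) ((hm _).trans_lt (hlt _ hn)))
      · rintro (_ | n) hn
        · omega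
        · rw [Multiset.card_cons] at hn
          rw [hS]
          exact (hsub _ _).trans_lt (max_lt (hgt n (by omega)) ((hm _).trans_lt (hgt _ (by omega))))
      · intro w hw
        rw [eval_mul, norm_mul, hev w hw]
        simp only [eval_sub, eval_X, eval_C, Multiset.map_cons, Multiset.prod_cons]
        ring
    · have hm : ∀ n, ‖α * P.coeff n‖ ≤ ‖α‖ * G := fun n => by
        rw [norm_mul]; exact mul_le_mul_of_nonneg_left (hle n) hα0
      have hm' : ∀ n, ‖P.coeff n‖ < G → ‖α * P.coeff n‖ < ‖α‖ * G := fun n h => by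
        rw [norm_mul]; exact mul_lt_mul_of_pos_left h (by linarith)
      have hl : ∀ n, ‖P.coeff n‖ < ‖α‖ * G := fun n => by
        have := hle n; nlinarith
      have key : ∀ n, ‖P.coeff n‖ = G → ‖((X - C α) * P).coeff n‖ = ‖α‖ * G := by
        rintro (_ | n) h
        · rw [h0, norm_neg, norm_mul, h]
        · rw [hS, hR, norm_mul, h]
          rw [norm_mul, h]; exact hl n
      have key' : ∀ n, ‖P.coeff n‖ < G → ‖((X - C α) * P).coeff n‖ < ‖α‖ * G := by
        rintro (_ | n) h
        · rw [h0, norm_neg]; exact hm' _ h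
        · rw [hS]; exact (hsub _ _).trans_lt (max_lt (hl _) (hm' _ h))
      refine ⟨‖α‖ * G, A, t, by nlinarith, hts.trans (Multiset.le_cons_self _ _), ht, ?_, key _ hA,
        key _ hB, fun n hn => key' _ (hlt n hn), fun n hn => key' _ (hgt n hn), ?_⟩
      · intro n
        rcases (hle n).lt_or_eq with h | h
        · exact (key' n h).le
        · exact (key n h).le
      · intro w hw
        rw [eval_mul, norm_mul, hev w hw]
        simp only [eval_sub, eval_X, eval_C]
        rw [hR w α (by rw [hw]; exact h1)]
        ring

open Polynomial in
/-- polynomial version: unit maximal coefficient norm attained first at `i`, last at `j`. -/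
theorem aux_poly {k : Type*} [NontriviallyNormedField k] [IsAlgClosed k] [IsUltrametricDist k]
    (Q : k[X]) (i j : ℕ) (hle : ∀ n, ‖Q.coeff n‖ ≤ 1) (hi : ‖Q.coeff i‖ = 1)
    (hj : ‖Q.coeff j‖ = 1) (hlt : ∀ n, n < i → ‖Q.coeff n‖ < 1)
    (hgt : ∀ n, j < n → ‖Q.coeff n‖ < 1) :
    ∃ t : Multiset k, i + Multiset.card t = j ∧ (∀ α ∈ t, ‖α‖ = 1 ∧ Q.eval α = 0) ∧
      ∀ w : k, ‖w‖ = 1 → ‖Q.eval w‖ = (t.map (fun α => ‖w - α‖)).prod := by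
  obtain ⟨G, A, t, hG, hts, ht, hle', hA, hB, hlt', hgt', hev⟩ := aux_prod Q.roots
  have hQ0 : Q ≠ 0 := by rintro rfl; simp at hi
  have hQ : Q = C Q.leadingCoeff * (Q.roots.map (fun α => X - C α)).prod :=
    (IsAlgClosed.splits Q).eq_prod_roots
  set P := (Q.roots.map (fun α => X - C α)).prod
  set l := Q.leadingCoeff
  have hl : 0 < ‖l‖ := norm_pos_iff.2 (leadingCoeff_ne_zero.2 hQ0)
  have hc : ∀ n, ‖Q.coeff n‖ = ‖l‖ * ‖P.coeff n‖ := fun n => by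
    rw [hQ, coeff_C_mul, norm_mul]
  have hlG : ‖l‖ * G = 1 := by
    apply le_antisymm
    · rw [← hA, ← hc]; exact hle _
    · rw [← hi, hc]; exact mul_le_mul_of_nonneg_left (hle' _) hl.le
  have e1 : ∀ n, ‖P.coeff n‖ < G → ‖Q.coeff n‖ < 1 := fun n h => by
    rw [hc, ← hlG]; exact mul_lt_mul_of_pos_left h hl
  have hAi : A = i := by
    rcases lt_trichotomy A i with h | h | h
    · have := hlt _ h; rw [hc, hA, hlG] at this; exact absurd this (lt_irrefl _)
    · exact h
    · have := e1 _ (hlt' _ h); rw [hi] at this; exact absurd this (lt_irrefl _)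
  have hBj : A + Multiset.card t = j := by
    rcases lt_trichotomy (A + Multiset.card t) j with h | h | h
    · have := e1 _ (hgt' _ h); rw [hj] at this; exact absurd this (lt_irrefl _)
    · exact h
    · have := hgt _ h; rw [hc, hB, hlG] at this; exact absurd this (lt_irrefl _)
  refine ⟨t, by omega, fun α hα => ⟨ht α hα, ?_⟩, fun w hw => ?_⟩
  · exact (mem_roots hQ0).1 (Multiset.mem_of_le hts hα)
  · rw [hQ, eval_mul, eval_C, norm_mul, hev w hw, ← mul_assoc, hlG, one_mul]

theorem aux_near {k : Type*} [NontriviallyNormedField k] (t : Multiset k) (ht : 0 < Multiset.card t)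
    (w : k) (δ : ℝ) (hδ : 0 < δ)
    (h : (t.map (fun α => ‖w - α‖)).prod ≤ δ ^ Multiset.card t) : ∃ α ∈ t, ‖w - α‖ ≤ δ := by
  by_contra! hcon
  have : ∀ s : Multiset k, (∀ α ∈ s, δ < ‖w - α‖) → δ ^ Multiset.card s ≤ (s.map (fun α => ‖w - α‖)).prod ∧
      (0 < Multiset.card s → δ ^ Multiset.card s < (s.map (fun α => ‖w - α‖)).prod) := by
    intro s
    induction s using Multiset.induction_on with
    | empty => simp
    | cons a s ih =>
      intro hs
      have h1 := (ih (fun α hα => hs α (Multiset.mem_cons_of_mem hα))).1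
      have h2 := hs a (Multiset.mem_cons_self _ _)
      have h3 : δ ^ Multiset.card (a ::ₘ s) < ((a ::ₘ s).map (fun α => ‖w - α‖)).prod := by
        rw [Multiset.card_cons, Multiset.map_cons, Multiset.prod_cons, pow_succ']
        have : 0 < δ ^ Multiset.card s := by positivity
        nlinarith
      exact ⟨h3.le, fun _ => h3⟩
  exact absurd h (not_le.2 ((this t hcon).2 ht))

theorem aux_unit_zpow {k : Type*} [NontriviallyNormedField k] (w : k) (hw : ‖w‖ = 1) (n : ℤ) :
    ‖w ^ n‖ = 1 := by rw [norm_zpow, hw, one_zpow]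

theorem aux_summable {k : Type*} [NontriviallyNormedField k] [CompleteSpace k]
    [IsUltrametricDist k] (b : ℤ → k) (hb : Tendsto (fun n => ‖b n‖) cofinite (nhds 0))
    (w : k) (hw : ‖w‖ = 1) : Summable (fun n : ℤ => b n * w ^ n) := by
  apply NonarchimedeanAddGroup.summable_of_tendsto_cofinite_zero
  rw [tendsto_zero_iff_norm_tendsto_zero]
  simpa only [norm_mul, aux_unit_zpow w hw, mul_one] using hb

open Polynomial in
theorem aux_approx {k : Type*} [NontriviallyNormedField k] [IsAlgClosed k] [CompleteSpace k]
    [IsUltrametricDist k] (b : ℤ → k) (hb : Tendsto (fun n => ‖b n‖) cofinite (nhds 0))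
    (i j : ℤ) (hle : ∀ n, ‖b n‖ ≤ 1) (hi : ‖b i‖ = 1)
    (hj : ‖b j‖ = 1) (hlt : ∀ n, n < i → ‖b n‖ < 1)
    (hgt : ∀ n, j < n → ‖b n‖ < 1) (η : ℝ) (hη : 0 < η) :
    ∃ t : Multiset k, Multiset.card t = (j - i).toNat ∧
      (∀ α ∈ t, ‖α‖ = 1 ∧ ‖∑' n : ℤ, b n * α ^ n‖ ≤ η) ∧
      ∀ w : k, ‖w‖ = 1 → (t.map (fun α => ‖w - α‖)).prod ≤ max ‖∑' n : ℤ, b n * w ^ n‖ η := by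
  have hfin : {n : ℤ | ¬ ‖b n‖ < η}.Finite :=
    eventually_cofinite.1 (hb.eventually (gt_mem_nhds hη))
  have hN : ∃ N : ℕ, i.natAbs ≤ N ∧ j.natAbs ≤ N ∧ ∀ n : ℤ, N < n.natAbs → ‖b n‖ ≤ η := by
    refine ⟨i.natAbs + j.natAbs + hfin.toFinset.sup Int.natAbs, by omega, by omega, ?_⟩
    intro n hn
    by_contra h
    have : n ∈ hfin.toFinset := by simpa using le_of_lt (not_le.1 h)
    have := Finset.le_sup (f := Int.natAbs) this
    omega
  obtain ⟨N, hNi, hNj, hN⟩ := hN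
  set Q : k[X] := ∑ n ∈ Finset.range (2 * N + 1), monomial n (b ((n : ℤ) - N)) with hQ
  have hco : ∀ n, Q.coeff n = if n < 2 * N + 1 then b ((n : ℤ) - N) else 0 := by
    intro n
    simp [hQ, coeff_monomial]
  have happ : ∀ w : k, ‖w‖ = 1 →
      ‖(∑' n : ℤ, b n * w ^ n) - w ^ (-(N : ℤ)) * Q.eval w‖ ≤ η := by
    intro w hw
    have hw0 : w ≠ 0 := by rintro rfl; simp at hw
    set s : Finset ℤ := (Finset.range (2 * N + 1)).image (fun n : ℕ => (n : ℤ) - N) with hs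
    have hsum := (aux_summable b hb w hw).sum_add_tsum_compl (s := s)
    have h1 : ∑ n ∈ s, b n * w ^ n = w ^ (-(N : ℤ)) * Q.eval w := by
      rw [hs, Finset.sum_image (by intro x _ y _ h; simpa using h), hQ, eval_finsetSum,
        Finset.mul_sum]
      refine Finset.sum_congr rfl fun n _ => ?_
      rw [eval_monomial, sub_eq_add_neg, zpow_add₀ hw0, zpow_natCast]
      ring
    rw [← hsum, h1, add_sub_cancel_left]
    apply IsUltrametricDist.norm_tsum_le_of_forall_le_of_nonneg hη.le
    rintro ⟨n, hn⟩
    simp only [norm_mul, aux_unit_zpow w hw, mul_one]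
    apply hN
    by_contra hcon
    apply hn
    simp only [hs, Finset.coe_image, Set.mem_image, Finset.mem_coe, Finset.mem_range]
    exact ⟨(n + N).toNat, by omega, by omega⟩
  have hval : ∀ m : ℤ, m.natAbs ≤ N → Q.coeff (m + N).toNat = b m := by
    intro m hm
    rw [hco, if_pos (by omega)]
    congr 1; omega
  obtain ⟨t, ht1, ht2, ht3⟩ := aux_poly Q (i + N).toNat (j + N).toNat
    (fun n => by rw [hco]; split_ifs; exacts [hle _, by simp])
    (by rw [hval i hNi, hi]) (by rw [hval j hNj, hj])
    (fun n hn => by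
      rw [hco]; split_ifs
      · exact hlt _ (by omega)
      · simp)
    (fun n hn => by
      rw [hco]; split_ifs
      · exact hgt _ (by omega)
      · simp)
  refine ⟨t, by omega, fun α hα => ⟨(ht2 α hα).1, ?_⟩, fun w hw => ?_⟩
  · have := happ α (ht2 α hα).1
    rwa [(ht2 α hα).2, mul_zero, sub_zero] at this
  · rw [← ht3 w hw]
    have h1 : ‖Q.eval w‖ = ‖w ^ (-(N : ℤ)) * Q.eval w‖ := by
      rw [norm_mul, aux_unit_zpow w hw, one_mul]
    have h2 := IsUltrametricDist.norm_add_le_max (∑' n : ℤ, b n * w ^ n)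
      (-((∑' n : ℤ, b n * w ^ n) - w ^ (-(N : ℤ)) * Q.eval w))
    rw [norm_neg, neg_sub, add_sub_cancel] at h2
    rw [h1]
    exact h2.trans (max_le_max le_rfl (happ w hw))

theorem aux_lip {k : Type*} [NontriviallyNormedField k] [IsUltrametricDist k]
    (w v : k) (hw : ‖w‖ = 1) (hv : ‖v‖ = 1) (n : ℤ) : ‖w ^ n - v ^ n‖ ≤ ‖w - v‖ := by
  have hw0 : w ≠ 0 := by rintro rfl; simp at hw
  have hv0 : v ≠ 0 := by rintro rfl; simp at hv
  have hnat : ∀ n : ℕ, ‖w ^ n - v ^ n‖ ≤ ‖w - v‖ := by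
    intro n
    induction n with
    | zero => simp
    | succ n ih =>
      rw [show w ^ (n+1) - v ^ (n+1) = w * (w ^ n - v ^ n) + (w - v) * v ^ n by ring]
      refine (IsUltrametricDist.norm_add_le_max _ _).trans (max_le ?_ ?_)
      · rw [norm_mul, hw, one_mul]; exact ih
      · rw [norm_mul, norm_pow, hv, one_pow, mul_one]
  obtain ⟨m, rfl | rfl⟩ := n.eq_nat_or_neg
  · simpa using hnat m
  · have : w ^ (-(m:ℤ)) - v ^ (-(m:ℤ)) = w ^ (-(m:ℤ)) * v ^ (-(m:ℤ)) * (v ^ m - w ^ m) := by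
      rw [zpow_neg, zpow_neg, zpow_natCast, zpow_natCast]
      field_simp
    rw [this, norm_mul, norm_mul, aux_unit_zpow w hw, aux_unit_zpow v hv, norm_sub_rev]
    simpa using hnat m

theorem aux_circle {k : Type*} [NontriviallyNormedField k] [IsAlgClosed k] [CompleteSpace k]
    [IsUltrametricDist k] (b : ℤ → k) (hb : Tendsto (fun n => ‖b n‖) cofinite (nhds 0))
    (i j : ℤ) (hij : i < j) (hle : ∀ n, ‖b n‖ ≤ 1) (hi : ‖b i‖ = 1)
    (hj : ‖b j‖ = 1) (hlt : ∀ n, n < i → ‖b n‖ < 1)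
    (hgt : ∀ n, j < n → ‖b n‖ < 1) :
    ∃ w : k, ‖w‖ = 1 ∧ ∑' n : ℤ, b n * w ^ n = 0 := by
  set f : k → k := fun w => ∑' n : ℤ, b n * w ^ n with hf
  set d := (j - i).toNat with hd
  have hd0 : 0 < d := by omega
  have happ := aux_approx b hb i j hle hi hj hlt hgt
  have hδ : ∀ m : ℕ, (0:ℝ) < ((1/2:ℝ)^m)^d := fun m => by positivity
  have start : ∃ w : k, ‖w‖ = 1 ∧ ‖f w‖ ≤ ((1/2:ℝ)^0)^d := by
    obtain ⟨t, ht, ht2, -⟩ := happ _ (hδ 0)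
    obtain ⟨α, hα⟩ := Multiset.card_pos_iff_exists_mem.1 (by rw [ht]; exact hd0 : 0 < Multiset.card t)
    exact ⟨α, ht2 α hα⟩
  have step : ∀ (m : ℕ) (w : k), ‖w‖ = 1 ∧ ‖f w‖ ≤ ((1/2:ℝ)^m)^d →
      ∃ v : k, (‖v‖ = 1 ∧ ‖f v‖ ≤ ((1/2:ℝ)^(m+1))^d) ∧ ‖w - v‖ ≤ (1/2:ℝ)^m := by
    rintro m w ⟨hw, hfw⟩
    obtain ⟨t, ht, ht2, ht3⟩ := happ _ (hδ (m+1))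
    have hmono : ((1/2:ℝ)^(m+1))^d ≤ ((1/2:ℝ)^m)^d := by
      apply pow_le_pow_left₀ (by positivity)
      exact pow_le_pow_of_le_one (by norm_num) (by norm_num) (by omega)
    obtain ⟨α, hα, hα'⟩ := aux_near t (by rw [ht]; exact hd0) w ((1/2:ℝ)^m) (by positivity)
      (by rw [ht]; exact (ht3 w hw).trans (max_le hfw hmono))
    exact ⟨α, ht2 α hα, hα'⟩
  obtain ⟨w0, hw0⟩ := start
  choose! g hg1 hg2 using step
  let u : ℕ → k := fun m => Nat.rec w0 (fun m w => g m w) m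
  have hu : ∀ m, ‖u m‖ = 1 ∧ ‖f (u m)‖ ≤ ((1/2:ℝ)^m)^d := by
    intro m
    induction m with
    | zero => exact hw0
    | succ m ih => exact hg1 m (u m) ih
  have hcau : CauchySeq u := by
    apply cauchySeq_of_le_geometric (1/2) 1 (by norm_num)
    intro m
    rw [one_mul, dist_eq_norm]
    exact hg2 m (u m) (hu m)
  obtain ⟨w, hw⟩ := cauchySeq_tendsto_of_complete hcau
  have hw1 : ‖w‖ = 1 := by
    have h := hw.norm
    simp only [fun m => (hu m).1] at h
    exact tendsto_nhds_unique h tendsto_const_nhds |>.symm ▸ rfl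
  refine ⟨w, hw1, ?_⟩
  have hflip : ∀ m, ‖f w - f (u m)‖ ≤ ‖w - u m‖ := by
    intro m
    rw [hf]
    simp only
    rw [← (aux_summable b hb w hw1).tsum_sub (aux_summable b hb _ (hu m).1)]
    apply IsUltrametricDist.norm_tsum_le_of_forall_le_of_nonneg (norm_nonneg _)
    intro n
    rw [← mul_sub, norm_mul]
    exact (mul_le_of_le_one_left (norm_nonneg _) (hle n)).trans (aux_lip _ _ hw1 (hu m).1 n)
  have hlim : Tendsto (fun m => f (u m)) atTop (nhds (f w)) := by
    rw [tendsto_iff_norm_sub_tendsto_zero] at hw ⊢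
    refine squeeze_zero (fun _ => norm_nonneg _) (fun m => ?_) hw
    rw [norm_sub_rev, norm_sub_rev (u m)]; exact hflip m
  have hlim0 : Tendsto (fun m => f (u m)) atTop (nhds 0) := by
    rw [tendsto_zero_iff_norm_tendsto_zero]
    refine squeeze_zero (fun _ => norm_nonneg _) (fun m => (hu m).2.trans ?_)
      (tendsto_pow_atTop_nhds_zero_of_lt_one (by norm_num : (0:ℝ) ≤ 1/2) (by norm_num))
    exact pow_le_of_le_one (by positivity) (pow_le_one₀ (by norm_num) (by norm_num)) hd0.ne'
  exact tendsto_nhds_unique hlim hlim0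

theorem aux_max (g : ℤ → ℝ) (hg : Tendsto g cofinite (nhds 0))
    (n0 : ℤ) (hn0 : 0 < g n0) : ∃ i j : ℤ, (∀ n, g n ≤ g i) ∧ g j = g i ∧ 0 < g i ∧
      (∀ n, n < i → g n < g i) ∧ (∀ n, j < n → g n < g i) := by
  have hfin : ∀ n1, 0 < g n1 → {n : ℤ | ¬ g n < g n1}.Finite := fun n1 h =>
    eventually_cofinite.1 (hg.eventually (gt_mem_nhds h))
  obtain ⟨n1, hn1, hmax⟩ := (hfin n0 hn0).toFinset.exists_max_image g ⟨n0, by simp⟩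
  have hn1' : g n0 ≤ g n1 := by simpa using hn1
  have hmax' : ∀ n, g n ≤ g n1 := by
    intro n
    by_cases h : g n < g n0
    · linarith
    · exact hmax n (by simpa using h)
  have h1 : 0 < g n1 := by linarith
  have hne : (hfin n1 h1).toFinset.Nonempty := ⟨n1, by simp⟩
  set T := (hfin n1 h1).toFinset with hT
  have hmem : ∀ n, n ∈ T ↔ g n1 ≤ g n := by intro n; simp [hT]
  have hi : g (T.min' hne) = g n1 := le_antisymm (hmax' _) ((hmem _).1 (T.min'_mem hne))
  have hj : g (T.max' hne) = g n1 := le_antisymm (hmax' _) ((hmem _).1 (T.max'_mem hne))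
  refine ⟨T.min' hne, T.max' hne, by rw [hi]; exact hmax', by rw [hi, hj], by rw [hi]; exact h1, ?_, ?_⟩
  · intro n hn
    rw [hi]
    by_contra h
    exact absurd (T.min'_le n ((hmem n).2 (not_lt.1 h))) (not_le.2 hn)
  · intro n hn
    rw [hi]
    by_contra h
    exact absurd (T.le_max' n ((hmem n).2 (not_lt.1 h))) (not_le.2 hn)

theorem aux_cofinite {k : Type*} [NontriviallyNormedField k]
    (a : ℤ → k) (r : ℝ)
    (hpos : Tendsto (fun n : ℕ => ‖a (n : ℤ)‖ * r ^ (n : ℕ)) atTop (nhds 0))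
    (hneg : ∀ t : ℝ, 0 < t →
      Tendsto (fun n : ℕ => ‖a (-(n : ℤ))‖ * t ^ (-(n : ℤ))) atTop (nhds 0))
    (t : ℝ) (ht : 0 < t) (htr : t ≤ r) :
    Tendsto (fun n : ℤ => ‖a n‖ * t ^ n) cofinite (nhds 0) := by
  rw [Int.cofinite_eq, tendsto_sup]
  constructor
  · have h := (hneg t ht).comp (g := fun n : ℕ => ‖a (-(n : ℤ))‖ * t ^ (-(n : ℤ))) (f := Int.natAbs)
      (x := atBot) (tendsto_atBot_atTop.2 fun b => ⟨-b, fun n hn => by omega⟩)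
    refine h.congr' ?_
    filter_upwards [eventually_le_atBot 0] with n hn
    have : -(n.natAbs : ℤ) = n := by omega
    simp only [Function.comp, this]
  · rw [← Nat.map_cast_int_atTop, tendsto_map'_iff]
    refine squeeze_zero (fun n => mul_nonneg (norm_nonneg _) (zpow_nonneg ht.le _)) (fun n => ?_) hpos
    simp only [Function.comp, zpow_natCast]
    gcongr

/-- below any radius there is a critical radius, hence a zero. -/
theorem aux_zero {k : Type*} [NontriviallyNormedField k] [IsAlgClosed k] [CompleteSpace k]
    [IsUltrametricDist k]
    (a : ℤ → k) (r : ℝ)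
    (hco : ∀ t : ℝ, 0 < t → t ≤ r → Tendsto (fun n : ℤ => ‖a n‖ * t ^ n) cofinite (nhds 0))
    (hinf : {n : ℤ | n < 0 ∧ a n ≠ 0}.Infinite) (ε : ℝ) (hε : 0 < ε) (hεr : ε ≤ r) :
    ∃ z : k, z ≠ 0 ∧ ‖z‖ < ε ∧ ∑' n : ℤ, a n * z ^ n = 0 := by
  obtain ⟨n0, -, hn0⟩ := hinf.nonempty
  obtain ⟨m, -, hm1, -, hm0, hm2, -⟩ := aux_max _ (hco ε hε hεr) n0
    (mul_pos (norm_pos_iff.2 hn0) (by positivity))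
  have ham : a m ≠ 0 := by intro h; simp [h] at hm0
  have hamp := norm_pos_iff.2 ham
  have hex : ∀ n : ℤ, n < m → ∃ x : k, x ^ (m - n) = a n / a m := by
    intro n hn
    obtain ⟨x, hx⟩ := IsAlgClosed.exists_pow_nat_eq (a n / a m) (n := (m - n).toNat) (by omega)
    refine ⟨x, ?_⟩
    rw [← hx, ← zpow_natCast]
    congr 1; omega
  choose! x hx using hex
  have hx0 : ∀ n, n < m → a n ≠ 0 → x n ≠ 0 := by
    intro n hn han h
    have := hx n hn
    rw [h, zero_zpow _ (by omega)] at this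
    exact div_ne_zero han ham this.symm
  -- comparison
  have hcmp' : ∀ n, n < m → ∀ t : ℝ, 0 < t → (‖a n‖ * t ^ n < ‖a m‖ * t ^ m ↔ ‖x n‖ < t) ∧
      (‖a n‖ * t ^ n ≤ ‖a m‖ * t ^ m ↔ ‖x n‖ ≤ t) := by
    intro n hn t ht
    have h1 : ‖a n‖ = ‖a m‖ * ‖x n‖ ^ (m - n) := by
      rw [← norm_zpow, hx n hn, norm_div]; field_simp
    have h2 : t ^ m = t ^ (m - n) * t ^ n := by rw [← zpow_add₀ ht.ne']; congr 1; ring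
    rw [h1, h2, mul_assoc, mul_lt_mul_iff_right₀ hamp, mul_lt_mul_iff_left₀ (by positivity),
      mul_le_mul_iff_right₀ hamp, mul_le_mul_iff_left₀ (by positivity)]
    exact ⟨zpow_lt_zpow_iff_left₀ (norm_nonneg _) ht.le (by omega),
      zpow_le_zpow_iff_left₀ (norm_nonneg _) ht.le (by omega)⟩
  have hcmp := fun n hn t ht => (hcmp' n hn t ht).1
  have hxε : ∀ n, n < m → ‖x n‖ < ε := fun n hn => (hcmp n hn ε hε).1 (hm2 n hn)
  -- an index below m
  obtain ⟨n1, hn1m, hn1⟩ : ∃ n, n < m ∧ a n ≠ 0 := by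
    by_contra! hcon
    apply hinf
    refine (Set.finite_Ico m 0).subset ?_
    rintro n ⟨hn, han⟩
    exact ⟨by by_contra h; exact han (hcon n (by omega)), hn⟩
  have ht1 : 0 < ‖x n1‖ := norm_pos_iff.2 (hx0 n1 hn1m hn1)
  have ht1r : ‖x n1‖ ≤ r := (hxε n1 hn1m).le.trans hεr
  have hfin : {n : ℤ | ¬ ‖a n‖ * ‖x n1‖ ^ n < ‖a m‖ * ‖x n1‖ ^ m}.Finite :=
    eventually_cofinite.1 ((hco _ ht1 ht1r).eventually (gt_mem_nhds (by positivity)))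
  have hfin2 : {n : ℤ | n < m ∧ ‖x n1‖ ≤ ‖x n‖}.Finite := by
    refine hfin.subset ?_
    rintro n ⟨hn, h⟩
    simp only [Set.mem_ofPred_eq]
    rw [hcmp n hn _ ht1]
    exact not_lt.2 h
  obtain ⟨n2, hn2, hmax⟩ := hfin2.toFinset.exists_max_image (fun n => ‖x n‖) ⟨n1, by simpa using hn1m⟩
  have hn2' : n2 < m ∧ ‖x n1‖ ≤ ‖x n2‖ := by simpa using hn2
  have hmax' : ∀ n, n < m → ‖x n‖ ≤ ‖x n2‖ := by
    intro n hn
    by_cases h : ‖x n1‖ ≤ ‖x n‖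
    · exact hmax n (by simpa using ⟨hn, h⟩)
    · linarith [hn2'.2]
  obtain ⟨hn2m, h12⟩ := hn2'
  set y := x n2 with hy
  set ρ := ‖y‖ with hρ
  have hρ0 : 0 < ρ := by linarith
  have hρε : ρ < ε := hxε n2 hn2m
  have hy0 : y ≠ 0 := norm_pos_iff.1 hρ0
  -- m and n2 both maximise at ρ
  have hmm : ∀ n, ‖a n‖ * ρ ^ n ≤ ‖a m‖ * ρ ^ m := by
    intro n
    rcases lt_trichotomy n m with h | h | h
    · exact (hcmp' n h ρ hρ0).2.2 (hmax' n h)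
    · rw [h]
    · have e : ∀ p : ℤ, ρ ^ p = ε ^ p * (ρ / ε) ^ p := by
        intro p; rw [← mul_zpow]; congr 1; field_simp
      rw [e n, e m, ← mul_assoc, ← mul_assoc]
      refine mul_le_mul (hm1 n) ?_ (by positivity) (by positivity)
      exact zpow_le_zpow_right_of_le_one₀ (by positivity) ((div_le_one hε).2 hρε.le) h.le
  have hn2eq : ‖a n2‖ * ρ ^ n2 = ‖a m‖ * ρ ^ m := by
    refine le_antisymm (hmm n2) (not_lt.1 ?_)
    rw [hcmp n2 hn2m ρ hρ0]
    exact lt_irrefl _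
  set K := a m * y ^ m with hK
  have hK0 : K ≠ 0 := mul_ne_zero ham (zpow_ne_zero _ hy0)
  have hKn : ‖K‖ = ‖a m‖ * ρ ^ m := by rw [hK, norm_mul, norm_zpow]
  have hKp : 0 < ‖K‖ := norm_pos_iff.2 hK0
  set b : ℤ → k := fun n => a n * y ^ n / K with hb
  have hbn : ∀ n, ‖b n‖ = ‖a n‖ * ρ ^ n / ‖K‖ := by
    intro n; rw [hb]; simp only [norm_div, norm_mul, norm_zpow]; rfl
  have hbt : Tendsto (fun n => ‖b n‖) cofinite (nhds 0) := by
    simp only [hbn]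
    simpa using (hco ρ hρ0 (hρε.le.trans hεr)).div_const ‖K‖
  have hble : ∀ n, ‖b n‖ ≤ 1 := by
    intro n; rw [hbn, div_le_one hKp, hKn]; exact hmm n
  have hbm : ‖b m‖ = 1 := by rw [hbn, ← hKn, div_self hKp.ne']
  have hbn2 : ‖b n2‖ = 1 := by rw [hbn, hn2eq, ← hKn, div_self hKp.ne']
  obtain ⟨i, j, h1, h2, -, h3, h4⟩ := aux_max _ hbt m (by rw [hbm]; exact one_pos)
  have hi : ‖b i‖ = 1 := le_antisymm (hble i) (hbm ▸ h1 m)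
  simp only [hi] at h2 h3 h4
  have hij : i < j := by
    have e1 : i ≤ n2 := by
      by_contra h
      have := h3 n2 (by omega)
      linarith
    have e2 : m ≤ j := by
      by_contra h
      have := h4 m (by omega)
      linarith
    omega
  obtain ⟨w, hw, hzero⟩ := aux_circle b hbt i j hij hble hi h2 h3 h4
  have hw0 : w ≠ 0 := by rintro rfl; simp at hw
  refine ⟨y * w, mul_ne_zero hy0 hw0, by rw [norm_mul, hw, mul_one]; exact hρε, ?_⟩
  have : ∀ n : ℤ, a n * (y * w) ^ n = K * (b n * w ^ n) := by
    intro n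
    rw [hb, mul_zpow]
    field_simp
  simp only [this]
  rw [tsum_mul_left, hzero, mul_zero]

/-- A Laurent series, analytic on the punctured disc `0 < |z| ≤ r`, with infinitely
many nonzero coefficients of negative index, has infinitely many zeros in the
punctured disc. -/
theorem essential_singularity_infinitely_many_zeros
    (k : Type*) [NontriviallyNormedField k] [IsAlgClosed k] [CompleteSpace k]
    [IsUltrametricDist k]
    (a : ℤ → k) (c : k) (hc : c ≠ 0) (r : ℝ) (hr : r = ‖c‖)
    (hpos : Tendsto (fun n : ℕ => ‖a (n : ℤ)‖ * r ^ (n : ℕ)) atTop (nhds 0))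
    (hneg : ∀ t : ℝ, 0 < t →
      Tendsto (fun n : ℕ => ‖a (-(n : ℤ))‖ * t ^ (-(n : ℤ))) atTop (nhds 0))
    (hinf : {n : ℤ | n < 0 ∧ a n ≠ 0}.Infinite) :
    {z : k | z ≠ 0 ∧ ‖z‖ ≤ r ∧ ∑' n : ℤ, a n * z ^ n = 0}.Infinite := by
  have hr0 : 0 < r := by rw [hr]; exact norm_pos_iff.2 hc
  have key := aux_zero a r (fun t ht htr => aux_cofinite a r hpos hneg t ht htr) hinf
  intro hfin
  obtain ⟨z0, hz0, hz0r, hz0f⟩ := key r hr0 le_rfl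
  obtain ⟨z, hz, hmin⟩ := hfin.toFinset.exists_min_image (fun z => ‖z‖)
    ⟨z0, by simpa using ⟨hz0, hz0r.le, hz0f⟩⟩
  obtain ⟨h1, h2, -⟩ := hfin.mem_toFinset.1 hz
  obtain ⟨v, hv, hvz, hvf⟩ := key ‖z‖ (norm_pos_iff.2 h1) h2
  exact absurd (hmin v (hfin.mem_toFinset.2 ⟨hv, hvz.le.trans h2, hvf⟩)) (not_le.2 hvz)
end

section
/- Non-Archimedean Big Picard theorem for nowhere-vanishing functions: let k be an algebraically closed field complete with respect to a nontrivial non-Archimedean absolute value, r ∈ |k*|, and let f = Σ_{n∈ℤ} aₙ zⁿ be a Laurent series convergent on the punctured disc {z : 0 < |z| ≤ r} (i.e., |aₙ| rⁿ → 0 as n → ∞ and |aₙ| tⁿ → 0 as n → −∞ for all t > 0). If f(z) ≠ 0 for all z with 0 < |z| ≤ r, then aₙ = 0 for all but finitely many negative n; that is, f is meromorphic at 0 with at worst a pole there. -/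
open Filter

section helpers
open Polynomial

variable {k : Type*} [NontriviallyNormedField k] [IsUltrametricDist k]

lemma zf_sum_lt {ι : Type*} (s : Finset ι) (f : ι → k) (h : ∀ i ∈ s, ‖f i‖ < 1) :
    ‖∑ i ∈ s, f i‖ < 1 := by
  classical
  induction s using Finset.induction_on with
  | empty => simp
  | insert a s ha ih =>
    rw [Finset.sum_insert ha]
    refine (IsUltrametricDist.norm_add_le_max _ _).trans_lt (max_lt (h _ (by simp)) (ih ?_))
    intro i hi
    exact h i (by simp [hi])

lemma zf_tsum_lt {ι : Type*} (f : ι → k) (h : ∀ i, ‖f i‖ < 1) :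
    ‖∑' i, f i‖ < 1 := by
  by_cases hs : Summable f
  · have h1 := IsUltrametricDist.isClosed_ball (0 : k) 1
    have h2 := h1.mem_of_tendsto hs.hasSum (Eventually.of_forall fun s => by
      simpa using zf_sum_lt s f (fun i _ => h i))
    simpa using h2
  · simp [tsum_eq_zero_of_not_summable hs]

lemma zf_prod_coeff (s : Multiset k) (ρ : ℝ) (h0 : 0 ≤ ρ) (h : ∀ x ∈ s, ρ ≤ ‖x‖) (i : ℕ) :
    ‖((s.map fun x => X - C x).prod).coeff i‖ * ρ ^ i ≤
      ‖((s.map fun x => X - C x).prod).coeff 0‖ := by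
  induction s using Multiset.induction_on generalizing i with
  | empty =>
    rcases i with _ | i
    · simp
    · simp [coeff_one]
  | cons x s ih =>
    have ih' := ih (fun y hy => h y (by simp [hy]))
    have hx : ρ ≤ ‖x‖ := h x (by simp)
    simp only [Multiset.map_cons, Multiset.prod_cons]
    set R := (s.map fun x => X - C x).prod
    rcases i with _ | i
    · simp
    · have e1 : ((X - C x) * R).coeff (i+1) = R.coeff i + (-(x * R.coeff (i+1))) := by
        rw [sub_mul, coeff_sub, coeff_X_mul, coeff_C_mul]; ring
      have e0 : ((X - C x) * R).coeff 0 = -(x * R.coeff 0) := by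
        rw [sub_mul, coeff_sub]; simp
      rw [e1, e0, norm_neg, norm_mul]
      have := IsUltrametricDist.norm_add_le_max (R.coeff i) (-(x * R.coeff (i+1)))
      rw [norm_neg, norm_mul] at this
      refine (mul_le_mul_of_nonneg_right this (by positivity)).trans ?_
      rw [max_mul_of_nonneg _ _ (by positivity)]
      refine max_le ?_ ?_
      · calc ‖R.coeff i‖ * ρ ^ (i+1) = ρ * (‖R.coeff i‖ * ρ ^ i) := by ring
          _ ≤ ‖x‖ * ‖R.coeff 0‖ := by
            gcongr
            exact ih' i
      · calc ‖x‖ * ‖R.coeff (i+1)‖ * ρ ^ (i+1) = ‖x‖ * (‖R.coeff (i+1)‖ * ρ ^ (i+1)) := by ring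
          _ ≤ _ := by
            gcongr
            exact ih' _

/-- A root of small norm. -/
lemma zf_small_root [IsAlgClosed k] (Q : k[X]) (j : ℕ) (hj : 1 ≤ j) (hQ : 1 ≤ ‖Q.coeff j‖) :
    ∃ h : k, Q.eval h = 0 ∧ ‖h‖ ^ j ≤ ‖Q.coeff 0‖ := by
  classical
  have hQ0 : Q ≠ 0 := by rintro rfl; simp at hQ; linarith
  have hdeg : Q.degree ≠ 0 := by
    intro hd
    rw [eq_C_of_degree_eq_zero hd, coeff_C, if_neg (by omega)] at hQ
    simp at hQ; linarith
  obtain ⟨y, hy⟩ := IsAlgClosed.exists_root Q hdeg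
  have hy' : y ∈ Q.roots.toFinset := by simp [hQ0]; exact hy
  obtain ⟨h, hh, hmin⟩ := Finset.exists_min_image Q.roots.toFinset (fun x => ‖x‖) ⟨y, hy'⟩
  have hr : h ∈ Q.roots := by simpa using hh
  refine ⟨h, (mem_roots hQ0).1 hr, ?_⟩
  have key := zf_prod_coeff Q.roots ‖h‖ (norm_nonneg _) (fun x hx => hmin x (by simpa using hx)) j
  have hsp : Q = C Q.leadingCoeff * (Q.roots.map fun x => X - C x).prod :=
    (IsAlgClosed.splits Q).eq_prod_roots
  have c (i : ℕ) : ‖Q.coeff i‖ = ‖Q.leadingCoeff‖ *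
      ‖((Q.roots.map fun x => X - C x).prod).coeff i‖ := by
    conv_lhs => rw [hsp]
    rw [coeff_C_mul, norm_mul]
  calc ‖h‖ ^ j ≤ ‖Q.coeff j‖ * ‖h‖ ^ j := le_mul_of_one_le_left (by positivity) hQ
    _ ≤ ‖Q.coeff 0‖ := by
      rw [c j, c 0, mul_assoc]
      gcongr

lemma zf_taylor_small (E : k[X]) (hE : ∀ i, ‖E.coeff i‖ < 1) (z : k) (hz : ‖z‖ = 1) (n : ℕ) :
    ‖(taylor z E).coeff n‖ < 1 := by
  rw [taylor_coeff, eval_eq_sum_range]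
  apply zf_sum_lt
  intro i _
  rw [hasseDeriv_coeff, norm_mul, norm_mul, norm_pow, hz, one_pow, mul_one]
  have := IsUltrametricDist.norm_natCast_le_one k ((i+n).choose n)
  exact (mul_le_of_le_one_left (norm_nonneg _) this).trans_lt (hE _)

lemma zf_mul_small (R : k[X]) (z : k) (hz : ‖z‖ = 1) (d K : ℕ)
    (h : ∀ j ≤ d, ‖((X + C z) ^ K * R).coeff j‖ < 1) : ∀ j ≤ d, ‖R.coeff j‖ < 1 := by
  induction K with
  | zero => simpa using h
  | succ K ih =>
    apply ih
    rw [pow_succ', mul_assoc] at h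
    set S := (X + C z) ^ K * R
    intro j hj
    induction j with
    | zero =>
      have := h 0 hj
      rw [add_mul, coeff_add, coeff_C_mul] at this
      simpa [hz] using this
    | succ j ihj =>
      have h1 := h (j+1) hj
      have h2 := ihj (by omega)
      rw [add_mul, coeff_add, coeff_C_mul, coeff_X_mul] at h1
      have h3 : z * S.coeff (j+1) = (S.coeff j + z * S.coeff (j+1)) + -S.coeff j := by ring
      have h4 : ‖S.coeff (j+1)‖ = ‖z * S.coeff (j+1)‖ := by rw [norm_mul, hz, one_mul]
      rw [h4, h3]
      refine (IsUltrametricDist.norm_add_le_max _ _).trans_lt (max_lt h1 ?_)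
      rwa [norm_neg]

lemma zf_pow_lip (x y : k) (hx : ‖x‖ = 1) (hy : ‖y‖ = 1) (n : ℕ) :
    ‖x ^ n - y ^ n‖ ≤ ‖x - y‖ := by
  induction n with
  | zero => simp
  | succ n ih =>
    have : x ^ (n+1) - y ^ (n+1) = x ^ n * (x - y) + (x ^ n - y ^ n) * y := by ring
    rw [this]
    refine (IsUltrametricDist.norm_add_le_max _ _).trans (max_le ?_ ?_)
    · simp [hx]
    · simpa [hy] using ih

lemma zf_zpow_lip (x y : k) (hx : ‖x‖ = 1) (hy : ‖y‖ = 1) (n : ℤ) :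
    ‖x ^ n - y ^ n‖ ≤ ‖x - y‖ := by
  have hx0 : x ≠ 0 := by rintro rfl; simp at hx
  have hy0 : y ≠ 0 := by rintro rfl; simp at hy
  obtain ⟨n, rfl | rfl⟩ := n.eq_nat_or_neg
  · simpa using zf_pow_lip x y hx hy n
  · rw [zpow_neg, zpow_neg, zpow_natCast, zpow_natCast,
      inv_sub_inv (pow_ne_zero _ hx0) (pow_ne_zero _ hy0)]
    simpa [hx, hy, norm_sub_rev] using zf_pow_lip y x hy hx n

lemma zf_poly_coeff (f : ℕ → k) (n i : ℕ) :
    (∑ j ∈ Finset.range n, C (f j) * X ^ j : k[X]).coeff i = if i < n then f i else 0 := by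
  simp [coeff_X_pow]

lemma zf_summable [CompleteSpace k] (b : ℤ → k) (hb : Tendsto b cofinite (nhds 0)) (z : k)
    (hz : ‖z‖ = 1) : Summable fun n : ℤ => b n * z ^ n := by
  apply NonarchimedeanAddGroup.summable_of_tendsto_cofinite_zero
  rw [tendsto_zero_iff_norm_tendsto_zero] at hb ⊢
  simpa [hz] using hb

/-- The improvement step. -/
lemma zf_step [IsAlgClosed k] [CompleteSpace k] (b : ℤ → k) (hb : Tendsto b cofinite (nhds 0))
    (d : ℕ) (hd : ‖b d‖ = 1)
    (hneg : ∀ n < 0, ‖b n‖ < 1) (hbig : ∀ n : ℤ, d < n → ‖b n‖ < 1)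
    (η η' : ℝ) (h0 : 0 < η) (h1 : η < 1) (h0' : 0 < η') (z : k) (hz : ‖z‖ = 1)
    (hg : ‖∑' n : ℤ, b n * z ^ n‖ ≤ η) :
    ∃ z' : k, ‖z'‖ = 1 ∧ ‖z' - z‖ ^ d ≤ η ∧ ‖∑' n : ℤ, b n * z' ^ n‖ ≤ η' := by
  classical
  set ε := min η η' with hε
  have hεpos : 0 < ε := lt_min h0 h0'
  have hz0 : z ≠ 0 := by rintro rfl; simp at hz
  -- truncation
  obtain ⟨N, hdN, hN⟩ : ∃ N : ℕ, d ≤ N ∧ ∀ n : ℤ, (N : ℤ) < |n| → ‖b n‖ ≤ ε := by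
    have hfin : {n : ℤ | ¬ ‖b n‖ < ε}.Finite := by
      have := (tendsto_zero_iff_norm_tendsto_zero.1 hb).eventually (gt_mem_nhds hεpos)
      exact eventually_cofinite.1 this
    obtain ⟨B, hB⟩ := (hfin.image (fun n => n.natAbs)).bddAbove
    refine ⟨max d B, le_max_left _ _, fun n hn => ?_⟩
    by_contra hcon
    have : n.natAbs ≤ B := hB ⟨n, by simp; linarith, rfl⟩
    have : B ≤ max d B := le_max_right _ _
    rw [Int.abs_eq_natAbs] at hn
    omega
  set b' : ℤ → k := fun n => if |n| ≤ N then b n else 0 with hb'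
  have hbb : ∀ n, ‖b n - b' n‖ ≤ ε := by
    intro n
    simp only [hb']
    split_ifs with h
    · simpa using hεpos.le
    · simpa using hN n (by omega)
  have hb't : Tendsto b' cofinite (nhds 0) := by
    rw [tendsto_zero_iff_norm_tendsto_zero] at hb ⊢
    refine squeeze_zero (fun _ => norm_nonneg _) (fun n => ?_) hb
    simp only [hb']
    split_ifs <;> simp
  have happrox : ∀ w : k, ‖w‖ = 1 →
      ‖∑' n : ℤ, b n * w ^ n - ∑' n : ℤ, b' n * w ^ n‖ ≤ ε := by
    intro w hw
    rw [← (zf_summable b hb w hw).tsum_sub (zf_summable b' hb't w hw)]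
    apply IsUltrametricDist.norm_tsum_le_of_forall_le
    intro n
    rw [← sub_mul, norm_mul, norm_zpow, hw, one_zpow, mul_one]
    exact hbb n
  -- the polynomials
  set P : k[X] := ∑ i ∈ Finset.range (2 * N + 1), C (b ((i : ℤ) - N)) * X ^ i with hP
  set U : k[X] := ∑ i ∈ Finset.range (d + 1), C (b (i : ℤ)) * X ^ i with hU
  have hPc : ∀ i, P.coeff i = if i < 2 * N + 1 then b ((i : ℤ) - N) else 0 := fun i => by
    rw [hP, zf_poly_coeff (fun i : ℕ => b ((i : ℤ) - N))]
  have hUc : ∀ i, U.coeff i = if i < d + 1 then b i else 0 := fun i => by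
    rw [hU, zf_poly_coeff (fun i : ℕ => b (i : ℤ))]
  have hPeval : ∀ w : k, ‖w‖ = 1 → P.eval w = w ^ N * ∑' n : ℤ, b' n * w ^ n := by
    intro w hw
    have hw0 : w ≠ 0 := by rintro rfl; simp at hw
    have : ∑' n : ℤ, b' n * w ^ n =
        ∑ i ∈ Finset.range (2 * N + 1), b ((i : ℤ) - N) * w ^ ((i : ℤ) - N) := by
      rw [tsum_eq_sum (s := (Finset.range (2 * N + 1)).image (fun i : ℕ => (i : ℤ) - N)),
        Finset.sum_image]
      · refine Finset.sum_congr rfl fun i hi => ?_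
        simp only [hb']
        rw [if_pos]
        simp at hi
        rw [abs_le]; omega
      · intro i _ j _ hij
        simpa using hij
      · intro n hn
        simp only [hb']
        rw [if_neg, zero_mul]
        intro hle
        rw [abs_le] at hle
        apply hn
        simp only [Finset.mem_image, Finset.mem_range]
        exact ⟨(n + N).toNat, by omega, by omega⟩
    rw [this, hP, eval_finsetSum, Finset.mul_sum]
    refine Finset.sum_congr rfl fun i _ => ?_
    rw [zpow_sub₀ hw0, zpow_natCast, zpow_natCast]
    simp
    field_simp
  have hE : ∀ i, ‖(P - X ^ N * U).coeff i‖ < 1 := by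
    intro i
    rw [coeff_sub, coeff_X_pow_mul', hPc]
    split_ifs with h1 h2 h2
    · rw [hUc]
      split_ifs with h3
      · have : (((i - N : ℕ) : ℤ)) = (i : ℤ) - N := by omega
        rw [this]; simp
      · rw [sub_zero]
        exact hbig _ (by omega)
    · rw [sub_zero]
      exact hneg _ (by omega)
    · rw [hUc, if_neg (by omega)]; simp
    · simp
  have hUd : U.natDegree = d := by
    apply natDegree_eq_of_le_of_coeff_ne_zero
    · rw [natDegree_le_iff_coeff_eq_zero]
      intro n hn
      rw [hUc, if_neg (by omega)]
    · rw [hUc, if_pos (by omega)]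
      intro h
      rw [h] at hd; simp at hd
  set Q := taylor z P with hQ
  have hQ0 : ‖Q.coeff 0‖ ≤ η := by
    rw [hQ, taylor_coeff_zero, hPeval z hz, norm_mul, norm_pow, hz, one_pow, one_mul]
    have : ∑' n : ℤ, b' n * z ^ n = ∑' n : ℤ, b n * z ^ n +
      -(∑' n : ℤ, b n * z ^ n - ∑' n : ℤ, b' n * z ^ n) := by ring
    rw [this]
    refine (IsUltrametricDist.norm_add_le_max _ _).trans (max_le hg ?_)
    rw [norm_neg]
    exact (happrox z hz).trans (min_le_left _ _)
  obtain ⟨j, hjd, hj⟩ : ∃ j ≤ d, 1 ≤ ‖Q.coeff j‖ := by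
    by_contra! hcon
    have hdec : (X + C z) ^ N * taylor z U = Q - taylor z (P - X ^ N * U) := by
      rw [map_sub, taylor_mul, taylor_X_pow]; ring
    have := zf_mul_small (taylor z U) z hz d N (fun j hj => by
      rw [hdec, coeff_sub, sub_eq_add_neg]
      refine (IsUltrametricDist.norm_add_le_max _ _).trans_lt (max_lt (hcon j hj) ?_)
      rw [norm_neg]
      exact zf_taylor_small _ hE z hz j) d le_rfl
    have hl : (taylor z U).coeff d = b d := by
      have := coeff_taylor_natDegree z U
      rw [hUd, leadingCoeff, hUd, hUc, if_pos (by omega)] at this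
      exact this
    rw [hl, hd] at this
    exact lt_irrefl _ this
  have hj1 : 1 ≤ j := by
    rcases j with _ | j
    · linarith
    · omega
  obtain ⟨h, hroot, hsm⟩ := zf_small_root Q j hj1 hj
  have hh1 : ‖h‖ < 1 := by
    by_contra! hc
    have := one_le_pow₀ hc (n := j)
    linarith
  have hz' : ‖h + z‖ = 1 := by
    rw [IsUltrametricDist.norm_add_eq_max_of_norm_ne_norm (by rw [hz]; exact hh1.ne), hz]
    exact max_eq_right hh1.le
  refine ⟨h + z, hz', ?_, ?_⟩
  · rw [add_sub_cancel_right]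
    exact (pow_le_pow_of_le_one (norm_nonneg _) hh1.le hjd).trans (hsm.trans hQ0)
  · rw [hQ, taylor_eval, hPeval _ hz'] at hroot
    have hne : (h + z) ^ N ≠ 0 := pow_ne_zero _ (by rw [← norm_ne_zero_iff, hz']; simp)
    have h2 := (mul_eq_zero.1 hroot).resolve_left hne
    have := happrox _ hz'
    rw [h2, sub_zero] at this
    exact this.trans (min_le_right _ _)

lemma zf_core [IsAlgClosed k] [CompleteSpace k] (b : ℤ → k) (hb : Tendsto b cofinite (nhds 0))
    (d : ℕ) (hd1 : 1 ≤ d) (hd : ‖b d‖ = 1) (hzero : ‖b 0‖ = 1) (hle : ∀ n, ‖b n‖ ≤ 1)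
    (hneg : ∀ n < 0, ‖b n‖ < 1) (hbig : ∀ n : ℤ, d < n → ‖b n‖ < 1) :
    ∃ z : k, ‖z‖ = 1 ∧ ∑' n : ℤ, b n * z ^ n = 0 := by
  classical
  -- starting point
  obtain ⟨w, hw, hgw⟩ : ∃ w : k, ‖w‖ = 1 ∧ ‖∑' n : ℤ, b n * w ^ n‖ < 1 := by
    set U : k[X] := ∑ i ∈ Finset.range (d + 1), C (b (i : ℤ)) * X ^ i with hU
    have hUc : ∀ i, U.coeff i = if i < d + 1 then b i else 0 := fun i => by
      rw [hU, zf_poly_coeff (fun i : ℕ => b (i : ℤ))]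
    have hdeg : U.degree ≠ 0 := by
      intro hd0
      have h1 := hUc d
      rw [eq_C_of_degree_eq_zero hd0, coeff_C, if_neg (by omega), if_pos (by omega)] at h1
      rw [← h1] at hd; simp at hd
    obtain ⟨w, hroot⟩ := IsAlgClosed.exists_root U hdeg
    have hev : ∑ i ∈ Finset.range (d + 1), b (i : ℤ) * w ^ i = 0 := by
      have : U.eval w = 0 := hroot
      rw [hU, eval_finsetSum] at this
      simpa using this
    have hw : ‖w‖ = 1 := by
      rcases lt_trichotomy ‖w‖ 1 with h | h | h
      · exfalso
        rw [Finset.sum_range_succ'] at hev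
        have h2 : b 0 = -∑ i ∈ Finset.range d, b ((i + 1 : ℕ) : ℤ) * w ^ (i + 1) := by
          rw [eq_neg_iff_add_eq_zero, add_comm]
          simpa using hev
        rw [h2, norm_neg] at hzero
        refine hzero.not_lt (zf_sum_lt _ _ fun i _ => ?_)
        rw [norm_mul, norm_pow]
        exact (mul_le_of_le_one_left (by positivity) (hle _)).trans_lt
          (pow_lt_one₀ (norm_nonneg _) h (by omega))
      · exact h
      · exfalso
        have hw0 : w ≠ 0 := by rintro rfl; simp at h; linarith
        rw [Finset.sum_range_succ] at hev
        have h2 : b d = -∑ i ∈ Finset.range d, b (i : ℤ) * w ^ i * (w ^ d)⁻¹ := by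
          rw [← Finset.sum_mul, eq_neg_of_add_eq_zero_left hev]
          field_simp
        rw [h2, norm_neg] at hd
        refine hd.not_lt (zf_sum_lt _ _ fun i hi => ?_)
        rw [norm_mul, norm_mul, norm_inv, norm_pow, norm_pow, mul_assoc]
        refine (mul_le_of_le_one_left (by positivity) (hle _)).trans_lt ?_
        rw [← div_eq_mul_inv, div_lt_one (by positivity)]
        exact pow_lt_pow_right₀ h (by simpa using hi)
    refine ⟨w, hw, ?_⟩
    set b' : ℤ → k := fun n => if 0 ≤ n ∧ n ≤ d then b n else 0 with hb'
    have hb't : Tendsto b' cofinite (nhds 0) := by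
      rw [tendsto_zero_iff_norm_tendsto_zero] at hb ⊢
      refine squeeze_zero (fun _ => norm_nonneg _) (fun n => ?_) hb
      simp only [hb']
      split_ifs <;> simp
    have hz : ∑' n : ℤ, b' n * w ^ n = 0 := by
      rw [tsum_eq_sum (s := (Finset.range (d + 1)).image (fun i : ℕ => (i : ℤ))),
        Finset.sum_image]
      · rw [← hev]
        refine Finset.sum_congr rfl fun i hi => ?_
        simp only [hb']
        simp at hi
        rw [if_pos (by omega), zpow_natCast]
      · intro i _ j _ hij
        simpa using hij
      · intro n hn
        simp only [hb']
        rw [if_neg, zero_mul]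
        intro hle
        apply hn
        simp only [Finset.mem_image, Finset.mem_range]
        exact ⟨n.toNat, by omega, by omega⟩
    rw [← sub_zero (∑' n : ℤ, b n * w ^ n), ← hz,
      ← (zf_summable b hb w hw).tsum_sub (zf_summable b' hb't w hw)]
    apply zf_tsum_lt
    intro n
    rw [← sub_mul, norm_mul, norm_zpow, hw, one_zpow, mul_one]
    simp only [hb']
    split_ifs with h
    · simp
    · rw [sub_zero]
      by_cases h3 : n < 0
      · exact hneg n h3
      · exact hbig n (by omega)
  -- the sequence
  set g : k → k := fun z => ∑' n : ℤ, b n * z ^ n with hg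
  set η := max ‖g w‖ (1/2) with hη
  have hη0 : 0 < η := lt_of_lt_of_le (by norm_num) (le_max_right _ _)
  have hη1 : η < 1 := max_lt hgw (by norm_num)
  have hstep : ∀ n : ℕ, ∀ z : {z : k // ‖z‖ = 1 ∧ ‖g z‖ ≤ η / 2 ^ n},
      ∃ z' : {z : k // ‖z‖ = 1 ∧ ‖g z‖ ≤ η / 2 ^ (n+1)}, ‖(z' : k) - z‖ ^ d ≤ η / 2 ^ n := by
    rintro n ⟨z, hz, hgz⟩
    obtain ⟨z', h1, h2, h3⟩ := zf_step b hb d hd hneg hbig (η / 2 ^ n) (η / 2 ^ (n+1))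
      (by positivity) ((div_le_self hη0.le (one_le_pow₀ (by norm_num))).trans_lt hη1)
      (by positivity) z hz hgz
    exact ⟨⟨z', h1, h3⟩, h2⟩
  choose F hF using hstep
  let u : ∀ n : ℕ, {z : k // ‖z‖ = 1 ∧ ‖g z‖ ≤ η / 2 ^ n} := fun n =>
    Nat.rec (motive := fun n => {z : k // ‖z‖ = 1 ∧ ‖g z‖ ≤ η / 2 ^ n})
      ⟨w, hw, by simp [hη]⟩ F n
  have hu : ∀ n : ℕ, ‖(u (n+1)).1 - (u n).1‖ ^ d ≤ η / 2 ^ n := fun n => hF n (u n)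
  have hlim : Tendsto (fun n : ℕ => η / 2 ^ n) atTop (nhds 0) := by
    have := (tendsto_pow_atTop_nhds_zero_of_lt_one (r := (1/2 : ℝ)) (by norm_num)
      (by norm_num)).const_mul η
    simpa [div_eq_mul_inv] using this
  have hcau : CauchySeq (fun n : ℕ => (u n).1) := by
    apply NonarchimedeanAddGroup.cauchySeq_of_tendsto_sub_nhds_zero
    rw [tendsto_zero_iff_norm_tendsto_zero]
    have h1 : Tendsto (fun n : ℕ => ‖(u (n+1)).1 - (u n).1‖ ^ d) atTop (nhds 0) :=
      squeeze_zero (fun n => by positivity) hu hlim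
    rw [Metric.tendsto_atTop] at h1 ⊢
    intro ε hε
    obtain ⟨N, hN⟩ := h1 (ε ^ d) (by positivity)
    refine ⟨N, fun n hn => ?_⟩
    have := hN n hn
    simp only [dist_zero_right, norm_pow, norm_norm] at this ⊢
    exact lt_of_pow_lt_pow_left₀ d hε.le this
  obtain ⟨z, hz⟩ := cauchySeq_tendsto_of_complete hcau
  have hz1 : ‖z‖ = 1 := by
    refine tendsto_nhds_unique hz.norm ?_
    simp only [(u _).2.1]
    exact tendsto_const_nhds
  refine ⟨z, hz1, ?_⟩
  have hlip : ∀ n : ℕ, ‖g (u n).1 - g z‖ ≤ ‖(u n).1 - z‖ := by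
    intro n
    simp only [hg]
    rw [← (zf_summable b hb _ (u n).2.1).tsum_sub (zf_summable b hb z hz1)]
    apply IsUltrametricDist.norm_tsum_le_of_forall_le
    intro i
    rw [← mul_sub, norm_mul]
    exact (mul_le_of_le_one_left (norm_nonneg _) (hle i)).trans (zf_zpow_lip _ _ (u n).2.1 hz1 i)
  have h1 : Tendsto (fun n : ℕ => g (u n).1) atTop (nhds (g z)) := by
    rw [tendsto_iff_norm_sub_tendsto_zero] at hz ⊢
    exact squeeze_zero (fun n => norm_nonneg _) hlip hz
  have h2 : Tendsto (fun n : ℕ => g (u n).1) atTop (nhds 0) :=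
    squeeze_zero_norm (fun n => (u n).2.2) hlim
  exact tendsto_nhds_unique h1 h2

/-- Core with arbitrary indices. -/
lemma zf_core' [IsAlgClosed k] [CompleteSpace k] (b : ℤ → k) (hb : Tendsto b cofinite (nhds 0))
    (m M : ℤ) (hmM : m < M) (hm : ‖b m‖ = 1) (hM : ‖b M‖ = 1) (hle : ∀ n, ‖b n‖ ≤ 1) :
    ∃ z : k, ‖z‖ = 1 ∧ ∑' n : ℤ, b n * z ^ n = 0 := by
  classical
  have hfin : {n : ℤ | ¬ ‖b n‖ < 1}.Finite := by
    have := (tendsto_zero_iff_norm_tendsto_zero.1 hb).eventually (gt_mem_nhds one_pos)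
    exact eventually_cofinite.1 this
  have hmS : m ∈ {n : ℤ | ¬ ‖b n‖ < 1} := by simp [hm]
  have hMS : M ∈ {n : ℤ | ¬ ‖b n‖ < 1} := by simp [hM]
  obtain ⟨p, hp, hpmin⟩ := Set.exists_min_image _ (fun n : ℤ => n) hfin ⟨m, hmS⟩
  obtain ⟨q, hq, hqmax⟩ := Set.exists_max_image _ (fun n : ℤ => n) hfin ⟨m, hmS⟩
  have hpm := hpmin m hmS
  have hqM := hqmax M hMS
  simp only [Set.mem_ofPred_eq, not_lt] at hp hq hpm hqM
  have hpq : p + ((q - p).toNat : ℤ) = q := by omega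
  obtain ⟨z, hz1, hz⟩ := zf_core (fun n => b (p + n))
    (hb.comp (add_right_injective p).tendsto_cofinite) (q - p).toNat (by omega)
    (by simp only [hpq]; exact le_antisymm (hle _) hq)
    (by simp only [add_zero]; exact le_antisymm (hle _) hp) (fun n => hle _)
    (fun n hn => by
      by_contra hc
      have := hpmin (p + n) hc
      omega)
    (fun n hn => by
      by_contra hc
      have := hqmax (p + n) hc
      omega)
  refine ⟨z, hz1, ?_⟩
  have hz0 : z ≠ 0 := by rintro rfl; simp at hz1
  rw [← (Equiv.addLeft p).tsum_eq]
  have : ∀ n : ℤ, b (Equiv.addLeft p n) * z ^ (Equiv.addLeft p n) =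
      z ^ p * (b (p + n) * z ^ n) := by
    intro n
    simp only [Equiv.coe_addLeft]
    rw [zpow_add₀ hz0]; ring
  simp only [this]
  rw [tsum_mul_left, hz, mul_zero]

end helpers

/-- Big Picard for nowhere-vanishing functions: a Laurent series analytic and
zero-free on the punctured disc `0 < |z| ≤ r` has only finitely many nonzero
coefficients of negative index, i.e. it is meromorphic at `0` with at worst a
pole there. -/
theorem zero_free_meromorphic_at_origin
    (k : Type*) [NontriviallyNormedField k] [IsAlgClosed k] [CompleteSpace k]
    [IsUltrametricDist k]
    (a : ℤ → k) (c : k) (hc : c ≠ 0) (r : ℝ) (hr : r = ‖c‖)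
    (hpos : Tendsto (fun n : ℕ => ‖a (n : ℤ)‖ * r ^ (n : ℕ)) atTop (nhds 0))
    (hneg : ∀ t : ℝ, 0 < t →
      Tendsto (fun n : ℕ => ‖a (-(n : ℤ))‖ * t ^ (-(n : ℤ))) atTop (nhds 0))
    (hzf : ∀ z : k, z ≠ 0 → ‖z‖ ≤ r → ∑' n : ℤ, a n * z ^ n ≠ 0) :
    {n : ℤ | n < 0 ∧ a n ≠ 0}.Finite := by
  by_contra hinf
  have hr0 : 0 < r := by rw [hr]; exact norm_pos_iff.2 hc
  -- convergence on all smaller circles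
  have hconv : ∀ s : ℝ, 0 < s → s ≤ r →
      Tendsto (fun n : ℤ => ‖a n‖ * s ^ n) cofinite (nhds 0) := by
    intro s hs hsr
    rw [Int.cofinite_eq, tendsto_sup]
    constructor
    · have h1 := hneg s hs
      have h2 : Tendsto (fun n : ℤ => (-n).toNat) atBot atTop := by
        rw [tendsto_atTop]
        intro B
        filter_upwards [eventually_le_atBot (-(B : ℤ))] with n hn
        omega
      refine (h1.comp h2).congr' ?_
      filter_upwards [eventually_le_atBot 0] with n hn
      have : -(((-n).toNat : ℕ) : ℤ) = n := by omega
      simp only [Function.comp, this]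
    · have h2 : Tendsto (fun n : ℤ => n.toNat) atTop atTop := by
        rw [tendsto_atTop]
        intro B
        filter_upwards [eventually_ge_atTop (B : ℤ)] with n hn
        omega
      have h1 : Tendsto (fun n : ℕ => ‖a (n : ℤ)‖ * s ^ n) atTop (nhds 0) :=
        squeeze_zero (fun n => by positivity) (fun n => by gcongr) hpos
      refine (h1.comp h2).congr' ?_
      filter_upwards [eventually_ge_atTop 0] with n hn
      have : ((n.toNat : ℕ) : ℤ) = n := by omega
      simp only [Function.comp]
      rw [← zpow_natCast, this]
  have hfin : ∀ s : ℝ, 0 < s → s ≤ r → ∀ ε : ℝ, 0 < ε →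
      {n : ℤ | ε ≤ ‖a n‖ * s ^ n}.Finite := by
    intro s hs hsr ε hε
    have := eventually_cofinite.1 ((hconv s hs hsr).eventually (gt_mem_nhds hε))
    simpa only [not_lt] using this
  -- the maximal term at `r`
  obtain ⟨p, hp0, hp⟩ := Set.Infinite.nonempty hinf
  obtain ⟨M, hMa, hM⟩ : ∃ M : ℤ, a M ≠ 0 ∧ ∀ n, ‖a n‖ * r ^ n ≤ ‖a M‖ * r ^ M := by
    have hpp : 0 < ‖a p‖ * r ^ p := mul_pos (norm_pos_iff.2 hp) (zpow_pos hr0 _)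
    obtain ⟨M, hM1, hM2⟩ := Set.exists_max_image _ (fun n : ℤ => ‖a n‖ * r ^ n)
      (hfin r hr0 le_rfl _ hpp) ⟨p, le_refl (‖a p‖ * r ^ p)⟩
    refine ⟨M, ?_, fun n => ?_⟩
    · intro h0
      simp only [Set.mem_ofPred_eq, h0, norm_zero, zero_mul] at hM1
      linarith
    · by_cases hn : ‖a p‖ * r ^ p ≤ ‖a n‖ * r ^ n
      · exact hM2 n hn
      · exact (not_le.1 hn).le.trans hM1
  have hMpos : 0 < ‖a M‖ := norm_pos_iff.2 hMa
  -- crossing radii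
  have hroot : ∀ n : ℤ, ∃ x : k, n < M → x ^ (M - n).toNat = a n / a M := by
    intro n
    by_cases hn : n < M
    · obtain ⟨x, hx⟩ := IsAlgClosed.exists_pow_nat_eq (a n / a M) (n := (M - n).toNat) (by omega)
      exact ⟨x, fun _ => hx⟩
    · exact ⟨0, fun h => absurd h hn⟩
  choose x hx using hroot
  have hxn : ∀ n < M, ‖a n‖ = ‖a M‖ * ‖x n‖ ^ (M - n).toNat := by
    intro n hn
    rw [← norm_pow, hx n hn, norm_div]
    field_simp
  have hzp : ∀ (s : ℝ), 0 < s → ∀ n < M, s ^ M = s ^ (M - n).toNat * s ^ n := by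
    intro s hs n hn
    rw [← zpow_natCast, ← zpow_add₀ hs.ne']
    congr 1; omega
  -- comparing `‖x n‖` with `s`
  have hcmp : ∀ (s : ℝ), 0 < s → ∀ n < M,
      (s ≤ ‖x n‖ ↔ ‖a M‖ * s ^ M ≤ ‖a n‖ * s ^ n) := by
    intro s hs n hn
    rw [hxn n hn, hzp s hs n hn, mul_assoc, mul_le_mul_iff_right₀ hMpos,
      mul_le_mul_iff_left₀ (zpow_pos hs n)]
    exact (pow_le_pow_iff_left₀ hs.le (norm_nonneg _) (by omega)).symm
  have hcmp' : ∀ (s : ℝ), 0 < s → ∀ n < M,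
      (‖x n‖ ≤ s ↔ ‖a n‖ * s ^ n ≤ ‖a M‖ * s ^ M) := by
    intro s hs n hn
    rw [hxn n hn, hzp s hs n hn, mul_assoc, mul_le_mul_iff_right₀ hMpos,
      mul_le_mul_iff_left₀ (zpow_pos hs n)]
    exact (pow_le_pow_iff_left₀ (norm_nonneg _) hs.le (by omega)).symm
  obtain ⟨q, hqM, hq⟩ : ∃ q < M, a q ≠ 0 := by
    by_contra! hcon
    apply hinf
    refine (Set.finite_Ico M 0).subset ?_
    rintro n ⟨hn0, hn⟩
    refine ⟨?_, hn0⟩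
    by_contra hlt
    exact hn (hcon n (not_le.1 hlt))
  have hxpos : ∀ n < M, a n ≠ 0 → 0 < ‖x n‖ := by
    intro n hn ha
    rw [norm_pos_iff]
    intro h0
    have := hxn n hn
    rw [h0, norm_zero, zero_pow (by omega), mul_zero] at this
    exact ha (norm_eq_zero.1 this)
  have hxr : ∀ n < M, ‖x n‖ ≤ r := fun n hn => (hcmp' r hr0 n hn).2 (hM n)
  -- the largest crossing radius
  obtain ⟨m, hmM, hxm0, hm⟩ : ∃ m < M, 0 < ‖x m‖ ∧ ∀ n < M, ‖x n‖ ≤ ‖x m‖ := by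
    have hq0 := hxpos q hqM hq
    have hS : {n : ℤ | n < M ∧ ‖x q‖ ≤ ‖x n‖}.Finite := by
      refine (hfin ‖x q‖ hq0 (hxr q hqM) (‖a M‖ * ‖x q‖ ^ M)
        (mul_pos hMpos (zpow_pos hq0 _))).subset ?_
      rintro n ⟨hn, hn'⟩
      exact (hcmp _ hq0 n hn).1 hn'
    obtain ⟨m, hm1, hm2⟩ := Set.exists_max_image _ (fun n : ℤ => ‖x n‖) hS ⟨q, hqM, le_rfl⟩
    refine ⟨m, hm1.1, hq0.trans_le hm1.2, fun n hn => ?_⟩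
    by_cases h : ‖x q‖ ≤ ‖x n‖
    · exact hm2 n ⟨hn, h⟩
    · exact (not_le.1 h).le.trans hm1.2
  have hxm : x m ≠ 0 := norm_pos_iff.1 hxm0
  set s := ‖x m‖ with hs
  have hsr : s ≤ r := hxr m hmM
  have hmax : ∀ n, ‖a n‖ * s ^ n ≤ ‖a M‖ * s ^ M := by
    intro n
    by_cases hn : n < M
    · exact (hcmp' s hxm0 n hn).1 (hm n hn)
    · obtain ⟨j, rfl⟩ : ∃ j : ℕ, n = M + j := ⟨(n - M).toNat, by omega⟩
      have h1 := hM (M + j)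
      rw [zpow_add₀ hr0.ne', zpow_natCast, mul_comm (r ^ M), ← mul_assoc,
        mul_le_mul_iff_left₀ (zpow_pos hr0 M)] at h1
      rw [zpow_add₀ hxm0.ne', zpow_natCast, mul_comm (s ^ M), ← mul_assoc,
        mul_le_mul_iff_left₀ (zpow_pos hxm0 M)]
      refine le_trans ?_ h1
      gcongr
  set A := a M * x m ^ M with hA
  have hA0 : A ≠ 0 := mul_ne_zero hMa (zpow_ne_zero _ hxm)
  have hAn : ‖A‖ = ‖a M‖ * s ^ M := by rw [hA, norm_mul, norm_zpow]
  have hApos : 0 < ‖A‖ := norm_pos_iff.2 hA0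
  have hbn : ∀ n, ‖a n * x m ^ n / A‖ = ‖a n‖ * s ^ n / ‖A‖ := by
    intro n
    rw [norm_div, norm_mul, norm_zpow]
  obtain ⟨z, hz1, hz⟩ := zf_core' (fun n => a n * x m ^ n / A)
    (by
      rw [tendsto_zero_iff_norm_tendsto_zero]
      simp only [hbn]
      simpa using (hconv s hxm0 hsr).div_const ‖A‖)
    m M hmM
    (by
      rw [hbn, div_eq_one_iff_eq hApos.ne', hAn]
      exact le_antisymm (hmax m) ((hcmp s hxm0 m hmM).1 le_rfl))
    (by rw [hbn, div_eq_one_iff_eq hApos.ne', hAn])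
    (fun n => by
      rw [hbn, div_le_one hApos, hAn]
      exact hmax n)
  have hz0 : z ≠ 0 := by rintro rfl; simp at hz1
  refine hzf (x m * z) (mul_ne_zero hxm hz0) (by rw [norm_mul, hz1, mul_one]; exact hsr) ?_
  have : ∀ n : ℤ, a n * (x m * z) ^ n = A * (a n * x m ^ n / A * z ^ n) := by
    intro n
    rw [mul_zpow]
    field_simp
  simp only [this]
  rw [tsum_mul_left, hz, mul_zero]
end

section
/- Let k be an algebraically closed complete non-Archimedean valued field, r ∈ |k*|, and let f be a non-constant power series convergent on the closed disc D(r) = {z ∈ k : |z| ≤ r}. Then f : D(r) → k is an open map onto its image in the following sense: for every z₀ ∈ D(r) there exists δ > 0 such that the closed disc {w : |w − f(z₀)| ≤ δ} is contained in f(D(r)). -/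
open Filter

open Polynomial in
/-- `P` has Gauss norm `M`, attained last at the index `d`. -/
def GaussAt {k : Type*} [NontriviallyNormedField k] (P : Polynomial k) (d : ℕ) (M : ℝ) : Prop :=
  (∀ j, ‖P.coeff j‖ ≤ M) ∧ ‖P.coeff d‖ = M ∧ ∀ j, d < j → ‖P.coeff j‖ < M

theorem GaussAt.unique {k : Type*} [NontriviallyNormedField k] {P : Polynomial k} {d d' : ℕ}
    {M M' : ℝ} (h : GaussAt P d M) (h' : GaussAt P d' M') : d = d' ∧ M = M' := by
  obtain ⟨h1, h2, h3⟩ := h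
  obtain ⟨h1', h2', h3'⟩ := h'
  have hM : M = M' := le_antisymm (h2 ▸ h1' d) (h2' ▸ h1 d')
  subst hM
  refine ⟨?_, rfl⟩
  rcases lt_trichotomy d d' with h | h | h
  · have := h3 d' h; linarith
  · exact h
  · have := h3' d h; linarith

theorem norm_sub_le_max_ultra {k : Type*} [NontriviallyNormedField k] [IsUltrametricDist k]
    (x y : k) : ‖x - y‖ ≤ max ‖x‖ ‖y‖ := by
  simpa [sub_eq_add_neg] using IsUltrametricDist.norm_add_le_max x (-y)

theorem norm_sub_lt' {k : Type*} [NontriviallyNormedField k] [IsUltrametricDist k] {x y : k}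
    {M : ℝ} (hx : ‖x‖ < M) (hy : ‖y‖ < M) : ‖x - y‖ < M :=
  lt_of_le_of_lt (norm_sub_le_max_ultra x y) (max_lt hx hy)

theorem norm_sub_le' {k : Type*} [NontriviallyNormedField k] [IsUltrametricDist k] {x y : k}
    {M : ℝ} (hx : ‖x‖ ≤ M) (hy : ‖y‖ ≤ M) : ‖x - y‖ ≤ M :=
  (norm_sub_le_max_ultra x y).trans (max_le hx hy)

theorem norm_sub_eq_left' {k : Type*} [NontriviallyNormedField k] [IsUltrametricDist k] {x y : k}
    (h : ‖y‖ < ‖x‖) : ‖x - y‖ = ‖x‖ := by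
  apply le_antisymm (norm_sub_le' le_rfl h.le)
  by_contra hc
  push Not at hc
  have := norm_sub_lt' hc (show ‖-y‖ < ‖x‖ by rwa [norm_neg])
  simp at this

open Polynomial in
theorem GaussAt.mul_small {k : Type*} [NontriviallyNormedField k] [IsUltrametricDist k]
    {P : Polynomial k} {d : ℕ} {M : ℝ} (h : GaussAt P d M) {ρ : k} (hρ : ‖ρ‖ ≤ 1) :
    GaussAt (P * (X - C ρ)) (d + 1) M := by
  obtain ⟨h1, h2, h3⟩ := h
  have hs : ∀ j, ‖P.coeff j * ρ‖ ≤ ‖P.coeff j‖ := fun j => by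
    rw [norm_mul]; exact mul_le_of_le_one_right (norm_nonneg _) hρ
  refine ⟨?_, ?_, ?_⟩
  · rintro (_ | j)
    · rw [mul_sub, coeff_sub, coeff_mul_C, coeff_mul_X_zero, zero_sub, norm_neg]
      exact (hs 0).trans (h1 0)
    · rw [mul_sub, coeff_sub, coeff_mul_C, coeff_mul_X]
      exact norm_sub_le' (h1 j) ((hs _).trans (h1 _))
  · rw [mul_sub, coeff_sub, coeff_mul_C, coeff_mul_X, norm_sub_eq_left', h2]
    rw [h2]
    exact (hs _).trans_lt (h3 _ (by omega))
  · rintro (_ | j) hj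
    · omega
    · rw [mul_sub, coeff_sub, coeff_mul_C, coeff_mul_X]
      exact norm_sub_lt' (h3 j (by omega)) ((hs _).trans_lt (h3 _ (by omega)))

open Polynomial in
theorem GaussAt.mul_big {k : Type*} [NontriviallyNormedField k] [IsUltrametricDist k]
    {P : Polynomial k} {d : ℕ} {M : ℝ} (hM : 0 < M) (h : GaussAt P d M) {ρ : k} (hρ : 1 < ‖ρ‖) :
    GaussAt (P * (X - C ρ)) d (M * ‖ρ‖) := by
  obtain ⟨h1, h2, h3⟩ := h
  have hs : M < M * ‖ρ‖ := lt_mul_of_one_lt_right hM hρ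
  have h0 : 0 < ‖ρ‖ := by linarith
  have hX : ∀ j, ‖(P * X).coeff j‖ < M * ‖ρ‖ := by
    rintro (_ | j)
    · rw [coeff_mul_X_zero, norm_zero]; positivity
    · rw [coeff_mul_X]; exact (h1 j).trans_lt hs
  have hC : ∀ j, ‖(P * C ρ).coeff j‖ = ‖P.coeff j‖ * ‖ρ‖ := fun j => by
    rw [coeff_mul_C, norm_mul]
  refine ⟨fun j => ?_, ?_, fun j hj => ?_⟩
  · rw [mul_sub, coeff_sub]
    refine norm_sub_le' (hX j).le ?_
    rw [hC]; gcongr; exact h1 j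
  · rw [mul_sub, coeff_sub, norm_sub_rev, norm_sub_eq_left', hC, h2]
    rw [hC, h2]; exact hX d
  · rw [mul_sub, coeff_sub]
    refine norm_sub_lt' (hX j) ?_
    rw [hC]; gcongr; exact h3 j hj

open Polynomial in
theorem gauss_prod {k : Type*} [NontriviallyNormedField k] [IsUltrametricDist k]
    (a : k) (ha : a ≠ 0) (z : k) (hz : ‖z‖ ≤ 1) (η : ℝ) (hη : 0 ≤ η) (s : Multiset k)
    (hs : ∀ ρ ∈ s, ‖ρ‖ ≤ 1 → η ≤ ‖z - ρ‖) :
    ∃ d M, 0 < M ∧ GaussAt (C a * (s.map (fun ρ => X - C ρ)).prod) d M ∧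
      M * η ^ d ≤ ‖(C a * (s.map (fun ρ => X - C ρ)).prod).eval z‖ := by
  induction s using Multiset.induction_on with
  | empty =>
    refine ⟨0, ‖a‖, norm_pos_iff.2 ha, ⟨?_, ?_, ?_⟩, by simp⟩
    · intro j
      simp only [Multiset.map_zero, Multiset.prod_zero, mul_one, coeff_C]
      split_ifs <;> simp
    · simp
    · intro j hj
      simp [coeff_C, hj.ne', ha]
  | cons ρ s ih =>
    obtain ⟨d, M, hM, hG, hle⟩ := ih (fun ρ' h => hs ρ' (Multiset.mem_cons_of_mem h))
    have e : C a * ((ρ ::ₘ s).map (fun ρ => X - C ρ)).prod =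
        (C a * (s.map (fun ρ => X - C ρ)).prod) * (X - C ρ) := by
      rw [Multiset.map_cons, Multiset.prod_cons]; ring
    rw [e]
    have e2 : ∀ P : Polynomial k, ‖(P * (X - C ρ)).eval z‖ = ‖P.eval z‖ * ‖z - ρ‖ := fun P => by
      simp
    rw [e2]
    by_cases hρ : ‖ρ‖ ≤ 1
    · refine ⟨d + 1, M, hM, hG.mul_small hρ, ?_⟩
      have := hs ρ (Multiset.mem_cons_self _ _) hρ
      rw [pow_succ, ← mul_assoc]
      gcongr
    · push Not at hρ
      refine ⟨d, M * ‖ρ‖, by positivity, hG.mul_big hM hρ, ?_⟩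
      rw [norm_sub_rev z ρ, norm_sub_eq_left' (hz.trans_lt hρ)]
      calc M * ‖ρ‖ * η ^ d = M * η ^ d * ‖ρ‖ := by ring
        _ ≤ _ := by gcongr

open Polynomial in
/-- A point of the unit disc where `Q` is small is close to a root of `Q` in the disc. -/
theorem near_root {k : Type*} [NontriviallyNormedField k] [IsUltrametricDist k] [IsAlgClosed k]
    {Q : Polynomial k} {d : ℕ} {M : ℝ} (hM : 0 < M) (hQ : GaussAt Q d M)
    (z : k) (hz : ‖z‖ ≤ 1) (η : ℝ) (hη : 0 ≤ η) (h : ‖Q.eval z‖ < M * η ^ d) :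
    ∃ ρ, ‖ρ‖ ≤ 1 ∧ Q.eval ρ = 0 ∧ ‖z - ρ‖ < η := by
  by_contra hc
  push Not at hc
  have hQ0 : Q ≠ 0 := by
    rintro rfl
    have := hQ.2.1
    simp at this
    linarith
  have hsp : Q = C Q.leadingCoeff * (Q.roots.map (fun ρ => X - C ρ)).prod :=
    (IsAlgClosed.splits Q).eq_prod_roots
  obtain ⟨d', M', -, hG, hle⟩ := gauss_prod Q.leadingCoeff (leadingCoeff_ne_zero.2 hQ0) z hz η hη
    Q.roots (fun ρ hρ h1 => hc ρ h1 ((mem_roots hQ0).1 hρ))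
  rw [← hsp] at hG hle
  obtain ⟨rfl, rfl⟩ := hG.unique hQ
  linarith

theorem last_max (u : ℕ → ℝ) (hu : Tendsto u atTop (nhds 0)) (m : ℕ) (hm : 1 ≤ m)
    (hpos : 0 < u m) :
    ∃ d, 1 ≤ d ∧ 0 < u d ∧ (∀ j, 1 ≤ j → u j ≤ u d) ∧ ∀ j, d < j → u j < u d := by
  obtain ⟨N, hN⟩ := eventually_atTop.1 (hu.eventually (gt_mem_nhds hpos))
  have hmN : m < N := by
    by_contra h
    exact lt_irrefl _ (hN m (by omega))
  obtain ⟨d, hd, hmax⟩ := (Finset.Icc 1 N).exists_max_image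
    (fun j => (toLex (u j, j) : ℝ ×ₗ ℕ)) ⟨m, by simp; omega⟩
  simp only [Finset.mem_Icc, Prod.Lex.toLex_le_toLex] at hd hmax
  have hle : ∀ j, 1 ≤ j → j ≤ N → u j ≤ u d := fun j h1 h2 => by
    rcases hmax j ⟨h1, h2⟩ with h | h
    · exact h.le
    · exact h.1.le
  have hmd := hle m hm hmN.le
  refine ⟨d, hd.1, by linarith, fun j hj => ?_, fun j hj => ?_⟩
  · by_cases h : j ≤ N
    · exact hle j hj h
    · have := hN j (by omega); linarith
  · by_cases h : j ≤ N
    · rcases hmax j ⟨by omega, h⟩ with h | h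
      · exact h
      · omega
    · have := hN j (by omega); linarith

theorem norm_pow_sub_pow_le' {k : Type*} [NontriviallyNormedField k] [IsUltrametricDist k]
    {x y : k} (hx : ‖x‖ ≤ 1) (hy : ‖y‖ ≤ 1) (n : ℕ) : ‖x ^ n - y ^ n‖ ≤ ‖x - y‖ := by
  induction n with
  | zero => simp
  | succ n ih =>
    have e : x ^ (n + 1) - y ^ (n + 1) = x * (x ^ n - y ^ n) - y ^ n * (y - x) := by ring
    rw [e]
    apply norm_sub_le'
    · rw [norm_mul]
      exact (mul_le_of_le_one_left (norm_nonneg _) hx).trans ih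
    · rw [norm_mul, norm_pow, norm_sub_rev y x]
      exact mul_le_of_le_one_left (norm_nonneg _) (pow_le_one₀ (norm_nonneg _) hy)

theorem summable_disc {k : Type*} [NontriviallyNormedField k] [IsUltrametricDist k]
    [CompleteSpace k] (b : ℕ → k) (hb : Tendsto (fun n => ‖b n‖) atTop (nhds 0))
    (z : k) (hz : ‖z‖ ≤ 1) : Summable (fun n => b n * z ^ n) := by
  apply NonarchimedeanAddGroup.summable_of_tendsto_cofinite_zero
  rw [Nat.cofinite_eq_atTop, tendsto_zero_iff_norm_tendsto_zero]
  refine squeeze_zero (fun _ => norm_nonneg _) (fun n => ?_) hb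
  rw [norm_mul, norm_pow]
  exact mul_le_of_le_one_right (norm_nonneg _) (pow_le_one₀ (norm_nonneg _) hz)

open Polynomial in
/-- Truncation minus `w`. -/
noncomputable def truncSub {k : Type*} [NontriviallyNormedField k] (b : ℕ → k) (w : k) (N : ℕ) :
    Polynomial k := (∑ i ∈ Finset.range N, C (b i) * X ^ i) - C w

theorem truncSub_eval {k : Type*} [NontriviallyNormedField k] (b : ℕ → k) (w : k) (N : ℕ) (z : k) :
    (truncSub b w N).eval z = (∑ i ∈ Finset.range N, b i * z ^ i) - w := by
  simp [truncSub, Polynomial.eval_finsetSum]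

theorem truncSub_coeff {k : Type*} [NontriviallyNormedField k] (b : ℕ → k) (w : k) (N : ℕ)
    (j : ℕ) : (truncSub b w N).coeff j = (if j < N then b j else 0) - if j = 0 then w else 0 := by
  simp [truncSub, Polynomial.coeff_C, Polynomial.coeff_X_pow]

theorem truncSub_gauss {k : Type*} [NontriviallyNormedField k] (b : ℕ → k) (w : k) (N d : ℕ)
    (hd : 1 ≤ d) (hdN : d < N) (hpos : 0 < ‖b d‖) (h1 : ∀ j, 1 ≤ j → ‖b j‖ ≤ ‖b d‖)
    (h2 : ∀ j, d < j → ‖b j‖ < ‖b d‖) (hw : ‖b 0 - w‖ ≤ ‖b d‖) :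
    GaussAt (truncSub b w N) d ‖b d‖ := by
  refine ⟨fun j => ?_, ?_, fun j hj => ?_⟩
  · rw [truncSub_coeff]
    by_cases hj : j = 0
    · subst hj
      simpa [show 0 < N by omega] using hw
    · rw [if_neg hj, sub_zero]
      split_ifs
      · exact h1 j (by omega)
      · simp
  · rw [truncSub_coeff, if_pos hdN, if_neg (by omega), sub_zero]
  · rw [truncSub_coeff, if_neg (show j ≠ 0 by omega), sub_zero]
    split_ifs
    · exact h2 j hj
    · simpa using hpos

theorem solve_unit {k : Type*} [NontriviallyNormedField k] [IsUltrametricDist k] [IsAlgClosed k]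
    [CompleteSpace k] (b : ℕ → k) (hb : Tendsto (fun n => ‖b n‖) atTop (nhds 0)) (d : ℕ)
    (hd : 1 ≤ d) (hpos : 0 < ‖b d‖) (h1 : ∀ j, 1 ≤ j → ‖b j‖ ≤ ‖b d‖)
    (h2 : ∀ j, d < j → ‖b j‖ < ‖b d‖) (w : k) (hw : ‖b 0 - w‖ ≤ ‖b d‖) :
    ∃ z, ‖z‖ ≤ 1 ∧ ∑' n, b n * z ^ n = w := by
  set M := ‖b d‖ with hM
  have hG : ∀ n, GaussAt (truncSub b w (d + 1 + n)) d M := fun n =>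
    truncSub_gauss b w _ d hd (by omega) hpos h1 h2 hw
  let η : ℕ → ℝ := fun n => (‖b (d + 1 + n)‖ / M) ^ ((d : ℝ)⁻¹) + 1 / ((n : ℝ) + 1)
  have hη0 : ∀ n, 0 ≤ η n := fun n => by positivity
  have hηd : ∀ n, ‖b (d + 1 + n)‖ < M * η n ^ d := fun n => by
    have hx : 0 ≤ ‖b (d + 1 + n)‖ / M := by positivity
    have e : ‖b (d + 1 + n)‖ = M * ((‖b (d + 1 + n)‖ / M) ^ ((d : ℝ)⁻¹)) ^ d := by
      rw [Real.rpow_inv_natCast_pow hx (by omega)]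
      field_simp
    rw [e]
    apply mul_lt_mul_of_pos_left _ hpos
    apply pow_lt_pow_left₀ _ (by positivity) (by omega)
    have : (0 : ℝ) < 1 / ((n : ℝ) + 1) := by positivity
    change _ < _ + _
    linarith
  have hηt : Tendsto η atTop (nhds 0) := by
    have t1 : Tendsto (fun n => ‖b (d + 1 + n)‖ / M) atTop (nhds 0) := by
      have := (hb.comp (tendsto_add_atTop_nat (d + 1))).div_const M
      simpa [Function.comp_def, add_comm, add_left_comm] using this
    have t2 := t1.rpow_const (p := ((d : ℝ)⁻¹)) (Or.inr (by positivity))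
    rw [Real.zero_rpow (by positivity)] at t2
    simpa [η] using t2.add tendsto_one_div_add_atTop_nhds_zero_nat
  -- one step
  have step : ∀ n (z : k), ‖z‖ ≤ 1 ∧ (truncSub b w (d + 1 + n)).eval z = 0 →
      ∃ ρ, (‖ρ‖ ≤ 1 ∧ (truncSub b w (d + 1 + (n + 1))).eval ρ = 0) ∧ ‖z - ρ‖ < η n := by
    intro n z ⟨hz, h0⟩
    obtain ⟨ρ, r1, r2, r3⟩ := near_root hpos (hG (n + 1)) z hz (η n) (hη0 n) (by
      refine lt_of_le_of_lt ?_ (hηd n)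
      rw [truncSub_eval] at h0 ⊢
      rw [← add_assoc, Finset.sum_range_succ, add_sub_right_comm, h0, zero_add, norm_mul, norm_pow]
      exact mul_le_of_le_one_right (norm_nonneg _) (pow_le_one₀ (norm_nonneg _) hz))
    exact ⟨ρ, ⟨r1, r2⟩, r3⟩
  have start : ∃ ρ : k, ‖ρ‖ ≤ 1 ∧ (truncSub b w (d + 1 + 0)).eval ρ = 0 := by
    set t := ‖(truncSub b w (d + 1 + 0)).eval 0‖ with ht
    obtain ⟨ρ, r1, r2, -⟩ := near_root hpos (hG 0) 0 (by simp) (t / M + 1) (by positivity) (by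
      have : t / M + 1 ≤ (t / M + 1) ^ d :=
        le_self_pow₀ (by have : 0 ≤ t / M := by positivity
                         linarith) (by omega)
      calc t < t + M := by linarith
        _ = M * (t / M + 1) := by field_simp
        _ ≤ _ := by gcongr)
    exact ⟨ρ, r1, r2⟩
  choose! g hg hg' using step
  obtain ⟨ρ₀, hρ₀⟩ := start
  let z : ℕ → k := fun n => Nat.rec ρ₀ (fun n y => g n y) n
  have hz : ∀ n, ‖z n‖ ≤ 1 ∧ (truncSub b w (d + 1 + n)).eval (z n) = 0 := by
    intro n
    induction n with
    | zero => exact hρ₀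
    | succ n ih => exact hg n (z n) ih
  have hzs : ∀ n, ‖z n - z (n + 1)‖ < η n := fun n => hg' n (z n) (hz n)
  have hc : CauchySeq z := by
    apply NonarchimedeanAddGroup.cauchySeq_of_tendsto_sub_nhds_zero
    rw [tendsto_zero_iff_norm_tendsto_zero]
    refine squeeze_zero (fun _ => norm_nonneg _) (fun n => ?_) hηt
    rw [norm_sub_rev]
    exact (hzs n).le
  obtain ⟨y, hy⟩ := cauchySeq_tendsto_of_complete hc
  have hy1 : ‖y‖ ≤ 1 := le_of_tendsto hy.norm (Eventually.of_forall fun n => (hz n).1)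
  refine ⟨y, hy1, ?_⟩
  have hsum := (summable_disc b hb y hy1).hasSum.tendsto_sum_nat
  have hsum' := hsum.comp (tendsto_add_atTop_nat (d + 1))
  refine tendsto_nhds_unique hsum' ?_
  rw [tendsto_iff_norm_sub_tendsto_zero]
  have hyz : Tendsto (fun n => (M + ‖b 0‖) * ‖z n - y‖) atTop (nhds 0) := by
    simpa using (tendsto_iff_norm_sub_tendsto_zero.1 hy).const_mul (M + ‖b 0‖)
  refine squeeze_zero (fun _ => norm_nonneg _) (fun n => ?_) hyz
  have h0 := (hz n).2
  rw [truncSub_eval, sub_eq_zero] at h0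
  rw [Function.comp_apply, add_comm n, ← h0, ← Finset.sum_sub_distrib]
  apply IsUltrametricDist.norm_sum_le_of_forall_le_of_nonneg (by positivity)
  intro i _
  rw [← mul_sub, norm_mul, norm_sub_rev (z n)]
  have : ‖b i‖ ≤ M + ‖b 0‖ := by
    rcases Nat.eq_zero_or_pos i with rfl | h
    · linarith
    · have := h1 i h
      have := norm_nonneg (b 0)
      linarith
  exact mul_le_mul this (norm_pow_sub_pow_le' hy1 (hz n).1 i) (norm_nonneg _) (by positivity)

/-- Open mapping: a non-constant power series convergent on the closed disc of
radius `r ∈ |k*|` maps that disc onto a set containing a closed disc around each of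
its values. -/
theorem open_mapping
    (k : Type*) [NontriviallyNormedField k] [IsAlgClosed k] [CompleteSpace k]
    [IsUltrametricDist k]
    (a : ℕ → k) (c : k) (hc : c ≠ 0) (r : ℝ) (hr : r = ‖c‖)
    (hdecay : Tendsto (fun n => ‖a n‖ * r ^ n) atTop (nhds 0))
    (hnc : ∃ n, 1 ≤ n ∧ a n ≠ 0)
    (z₀ : k) (hz₀ : ‖z₀‖ ≤ r) :
    ∃ δ : ℝ, 0 < δ ∧
      {w : k | ‖w - ∑' n : ℕ, a n * z₀ ^ n‖ ≤ δ}
        ⊆ (fun z : k => ∑' n : ℕ, a n * z ^ n) '' {z : k | ‖z‖ ≤ r} := by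
  have hc0 : 0 < ‖c‖ := norm_pos_iff.2 hc
  subst hr
  let b : ℕ → k := fun n => a n * c ^ n
  have hb : Tendsto (fun n => ‖b n‖) atTop (nhds 0) := by
    simpa [b] using hdecay
  have hab : ∀ y : k, ∑' n, a n * (c * y) ^ n = ∑' n, b n * y ^ n := fun y => by
    simp only [b, mul_pow, mul_assoc]
  obtain ⟨m, hm, ham⟩ := hnc
  obtain ⟨d, hd, hpos, h1, h2⟩ := last_max (fun n => ‖b n‖) hb m hm
    (norm_pos_iff.2 (mul_ne_zero ham (pow_ne_zero _ hc)))
  refine ⟨‖b d‖, hpos, fun w hw => ?_⟩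
  obtain ⟨y₀, rfl⟩ : ∃ y₀, z₀ = c * y₀ := ⟨z₀ / c, by field_simp⟩
  have hy₀ : ‖y₀‖ ≤ 1 := by
    rw [norm_mul] at hz₀
    exact le_of_mul_le_mul_left (by simpa using hz₀) hc0
  rw [Set.mem_ofPred_eq, hab] at hw
  have hs := summable_disc b hb y₀ hy₀
  have hb0 : ‖b 0 - ∑' n, b n * y₀ ^ n‖ ≤ ‖b d‖ := by
    rw [hs.tsum_eq_zero_add, pow_zero, mul_one, sub_add_cancel_left, norm_neg]
    have ht := ((summable_nat_add_iff 1).2 hs).hasSum.norm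
    refine le_of_tendsto ht (Eventually.of_forall fun s => ?_)
    apply IsUltrametricDist.norm_sum_le_of_forall_le_of_nonneg (norm_nonneg _)
    intro i _
    rw [norm_mul, norm_pow]
    exact (mul_le_of_le_one_right (norm_nonneg _) (pow_le_one₀ (norm_nonneg _) hy₀)).trans
      (h1 (i + 1) (by omega))
  obtain ⟨y, hy, hyw⟩ := solve_unit b hb d hd hpos h1 h2 w (by
    have := norm_sub_le' hb0 hw
    rwa [show b 0 - ∑' n, b n * y₀ ^ n - (w - ∑' n, b n * y₀ ^ n) = b 0 - w by ring] at this)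
  refine ⟨c * y, ?_, ?_⟩
  · rw [Set.mem_ofPred_eq, norm_mul]
    exact mul_le_of_le_one_right hc0.le hy
  · change ∑' n, a n * (c * y) ^ n = w
    rw [hab, hyw]
end
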